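/- Let D be a bounded domain in ℂ and assume that w ∈ ∂D is a regular boundary point. Then K_D(z) → ∞ as D ∋ z → w. -/

import Mathlib

open MeasureTheory Filter Topology Metric Set
open scoped ENNReal NNReal

/-- Truncated circle average of an `EReal`-valued function: the average over the circle of
center `c` and radius `R` of the function truncated below at `-n`. -/
noncomputable def circleAvgTrunc (u : ℂ → EReal) (c : ℂ) (R : ℝ) (n : ℕ) : ℝ :=
  (2 * Real.pi)⁻¹ * ∫ θ in (0:ℝ)..(2 * Real.pi),
    (max (u (c + R * Complex.exp (θ * Complex.I))) (-(n : ℝ) : EReal)).toReal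

/-- `u` is subharmonic on `Ω ⊆ ℂ`: values in `[-∞, ∞)`, upper semicontinuous on `Ω`, and for
every closed disc contained in `Ω` the value at the center is at most the mean over the
boundary circle (in the extended sense, via decreasing truncations). -/
def SubharmonicOn (u : ℂ → EReal) (Ω : Set ℂ) : Prop :=
  UpperSemicontinuousOn u Ω ∧ (∀ z ∈ Ω, u z < ⊤) ∧
    ∀ c ∈ Ω, ∀ R : ℝ, 0 < R → Metric.closedBall c R ⊆ Ω →
      u c ≤ ⨅ n : ℕ, (circleAvgTrunc u c R n : EReal)

/-- `u` is plurisubharmonic on `Ω`: values in `[-∞, ∞)`, upper semicontinuous on `Ω`, and its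
restriction to every complex line is subharmonic. -/
def PlurisubharmonicOn {E : Type*} [NormedAddCommGroup E] [NormedSpace ℂ E]
    (u : E → EReal) (Ω : Set E) : Prop :=
  UpperSemicontinuousOn u Ω ∧ (∀ z ∈ Ω, u z < ⊤) ∧
    ∀ a b : E, SubharmonicOn (fun lam : ℂ => u (a + lam • b)) {lam : ℂ | a + lam • b ∈ Ω}

/-- A set `P ⊆ ℂ` is polar. -/
def PolarSet (P : Set ℂ) : Prop :=
  ∀ z ∈ P, ∃ U : Set ℂ, IsOpen U ∧ IsConnected U ∧ z ∈ U ∧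
    ∃ u : ℂ → EReal, SubharmonicOn u U ∧ (∃ x ∈ U, u x ≠ ⊥) ∧ ∀ x ∈ P ∩ U, u x = ⊥

/-- A set `P ⊆ ℂⁿ` is pluripolar. -/
def PluripolarSet {E : Type*} [NormedAddCommGroup E] [NormedSpace ℂ E] (P : Set E) : Prop :=
  ∀ z ∈ P, ∃ U : Set E, IsOpen U ∧ IsConnected U ∧ z ∈ U ∧
    ∃ u : E → EReal, PlurisubharmonicOn u U ∧ (∃ x ∈ U, u x ≠ ⊥) ∧ ∀ x ∈ P ∩ U, u x = ⊥

/-- A domain `D` is pseudoconvex if `z ↦ -log dist(z, ∂D)` is plurisubharmonic on `D`. -/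
def IsPseudoconvex {E : Type*} [NormedAddCommGroup E] [NormedSpace ℂ E] (D : Set E) : Prop :=
  PlurisubharmonicOn (fun z => ((- Real.log (Metric.infDist z Dᶜ) : ℝ) : EReal)) D

/-- The square-integrable holomorphic functions on an open set `Ω`. -/
def L2h {E : Type*} [NormedAddCommGroup E] [NormedSpace ℂ E] [MeasureSpace E]
    (Ω : Set E) : Set (E → ℂ) :=
  {f | DifferentiableOn ℂ f Ω ∧ (∫⁻ z in Ω, (‖f z‖₊ : ℝ≥0∞) ^ 2) < ⊤}

/-- The Bergman kernel of `Ω` on the diagonal,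
`K_Ω(z) = sup { |f(z)|²/‖f‖²_{L²(Ω)} : f ∈ L²ₕ(Ω), f ≢ 0 }`. -/
noncomputable def bergmanKernel {E : Type*} [NormedAddCommGroup E] [NormedSpace ℂ E]
    [MeasureSpace E] (Ω : Set E) (z : E) : ℝ≥0∞ :=
  ⨆ (f : E → ℂ) (_ : f ∈ L2h Ω) (_ : ∃ w ∈ Ω, f w ≠ 0),
    (‖f z‖₊ : ℝ≥0∞) ^ 2 / ∫⁻ w in Ω, (‖f w‖₊ : ℝ≥0∞) ^ 2

/-- `D` is an `L²ₕ`-domain of holomorphy: there are no domains `D₀, D₁` with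
`∅ ≠ D₀ ⊆ D₁ ∩ D`, `D₁ ⊄ D`, such that every `f ∈ L²ₕ(D)` extends holomorphically to `D₁`
(agreeing with `f` on `D₀`). -/
def IsL2hDomainOfHolomorphy {E : Type*} [NormedAddCommGroup E] [NormedSpace ℂ E]
    [MeasureSpace E] (D : Set E) : Prop :=
  ¬ ∃ D0 D1 : Set E, IsOpen D0 ∧ IsConnected D0 ∧ IsOpen D1 ∧ IsConnected D1 ∧
      D0 ⊆ D1 ∩ D ∧ ¬ (D1 ⊆ D) ∧
      ∀ f ∈ L2h D, ∃ F : E → ℂ, DifferentiableOn ℂ F D1 ∧ Set.EqOn F f D0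

/-- `w` is a regular boundary point of the domain `D ⊆ ℂ`. -/
def RegularBoundaryPt (D : Set ℂ) (w : ℂ) : Prop :=
  ∃ U : Set ℂ, IsOpen U ∧ w ∈ U ∧ ∃ u : ℂ → EReal, SubharmonicOn u (U ∩ D) ∧
    (∀ z ∈ U ∩ D, u z < 0) ∧ Tendsto u (𝓝[U ∩ D] w) (𝓝 (0 : EReal))

/-- The (pluricomplex) Green function of a domain `D ⊆ ℂ` with logarithmic pole at `p`. -/
noncomputable def greenFn (D : Set ℂ) (p z : ℂ) : EReal :=
  sSup {v : EReal | ∃ u : ℂ → EReal, SubharmonicOn u D ∧ (∀ x ∈ D, u x < 0) ∧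
    (∃ C : ℝ, ∀ᶠ x in 𝓝 p, u x ≤ ((Real.log ‖x - p‖ + C : ℝ) : EReal)) ∧ v = u z}

/-- A polydisc in `ℂⁿ` with centre `c` and multiradius `r`. -/
def polydisc {n : ℕ} (c : Fin n → ℂ) (r : Fin n → ℝ) : Set (Fin n → ℂ) :=
  {z | ∀ i, ‖z i - c i‖ < r i}

open scoped ContDiff Gradient Laplacian InnerProductSpace

/-!
Suppose `K_D(z) ≤ M` at points `z` of `D` close to `w`. By duality and Weyl's lemma an approximate
delta at `z` lies within distance of order `√M` of the range of `∂̄` on test functions. This gives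
a compactly supported `h` on the plane, with Dirichlet energy bounded independently of `z`, such
that on a large disc `1 - (t - z) h(t)` is supported in `D`: there `h` is the Cauchy kernel
`1 / (t - z)` off `D`.

If `u` is the barrier at `w`, then `S = max (1 + a u) 0`, extended by zero, is subharmonic on `D`
near `w` with values in `[0, 1]`, and `S ≥ 1 / 2` near `w`. As `u < 0`, a large `a` makes the mean
of `S` over a disc of fixed radius `r` arbitrarily small. Now integrate `Δ S ≥ 0` against
`η² log (2r / |t - z|)`, where `η` is the real part of `1 - (t - z) h(t)` cut off at scale `r`.
Since `η(z) = 1`, the Laplacian of the logarithm contributes a term bounded below. By the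
inequalities of Caccioppoli and Hardy the other terms are at most a constant times `√r (1 + N)`,
where `N` bounds the energy of `h`, plus the normalized mean of `S` at scale `r`. This is
contradictory for small `r`, large `a`, and `z` close to `w`.
-/

section Divergence

variable {E : Type*} [NormedAddCommGroup E]

/-- The divergence of a vector field on a finite-dimensional real space, as the trace of its
derivative. -/
noncomputable def divergence [NormedSpace ℝ E] (X : E → E) (x : E) : ℝ :=
  LinearMap.trace ℝ E (fderiv ℝ X x)

section NormedSpace

variable [NormedSpace ℝ E] [FiniteDimensional ℝ E]

lemma continuous_divergence {X : E → E} (hX : ContDiff ℝ 1 X) : Continuous (divergence X) :=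
  ((LinearMap.trace ℝ E ∘ₗ ContinuousLinearMap.coeLM ℝ).continuous_of_finiteDimensional).comp
    (hX.continuous_fderiv one_ne_zero)

lemma divergence_smul {f : E → ℝ} {X : E → E} {x : E} (hf : DifferentiableAt ℝ f x)
    (hX : DifferentiableAt ℝ X x) :
    divergence (fun y ↦ f y • X y) x = f x * divergence X x + fderiv ℝ f x (X x) := by
  simp only [divergence, fderiv_fun_smul hf hX, ContinuousLinearMap.toLinearMap_add, map_add,
    ContinuousLinearMap.toLinearMap_smul, map_smul, smul_eq_mul,
    ContinuousLinearMap.coe_smulRight, LinearMap.trace_smulRight, ContinuousLinearMap.coe_coe]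

lemma divergence_sub_const (z x : E) : divergence (fun y ↦ y - z) x = Module.finrank ℝ E := by
  simp [divergence, fderiv_sub_const]

lemma divergence_eq_sum_coord {ι : Type*} [Fintype ι] (b : Module.Basis ι ℝ E) {X : E → E} {x : E}
    (hX : DifferentiableAt ℝ X x) :
    divergence X x = ∑ i, fderiv ℝ (fun y ↦ b.coord i (X y)) x (b i) := by
  classical
  have hcoord (i : ι) : fderiv ℝ (fun y ↦ b.coord i (X y)) x =
      (b.coord i).toContinuousLinearMap ∘L fderiv ℝ X x :=
    ((b.coord i).toContinuousLinearMap.hasFDerivAt.comp x hX.hasFDerivAt).fderiv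
  simp only [divergence, LinearMap.trace_eq_matrix_trace ℝ b, Matrix.trace, Matrix.diag_apply,
    LinearMap.toMatrix_apply, hcoord]
  rfl

variable [MeasurableSpace E] [BorelSpace E] {μ : Measure E} [μ.IsAddHaarMeasure]

lemma integral_fderiv_apply_eq_neg_integral_mul_divergence {q : E → ℝ} {X : E → E}
    (hq : ContDiff ℝ 1 q) (hc : HasCompactSupport q) (hX : ContDiff ℝ 1 X) :
    ∫ x, fderiv ℝ q x (X x) ∂μ = -∫ x, q x * divergence X x ∂μ := by
  let b := Module.finBasis ℝ E
  have hXi (i) : ContDiff ℝ 1 fun y ↦ b.coord i (X y) :=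
    (b.coord i).toContinuousLinearMap.contDiff.comp hX
  have hdq (i) : Continuous fun x ↦ fderiv ℝ q x (b i) :=
    (hq.continuous_fderiv one_ne_zero).clm_apply continuous_const
  have hdX (i) : Continuous fun x ↦ fderiv ℝ (fun y ↦ b.coord i (X y)) x (b i) :=
    ((hXi i).continuous_fderiv one_ne_zero).clm_apply continuous_const
  have hint1 (i) : Integrable (fun x ↦ fderiv ℝ q x (b i) * b.coord i (X x)) μ :=
    ((hdq i).mul (hXi i).continuous).integrable_of_hasCompactSupport
      ((hc.fderiv_apply ℝ (b i)).mul_right)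
  have hint2 (i) : Integrable (fun x ↦ q x * fderiv ℝ (fun y ↦ b.coord i (X y)) x (b i)) μ :=
    (hq.continuous.mul (hdX i)).integrable_of_hasCompactSupport hc.mul_right
  have hint3 (i) : Integrable (fun x ↦ q x * b.coord i (X x)) μ :=
    (hq.continuous.mul (hXi i).continuous).integrable_of_hasCompactSupport hc.mul_right
  have hparts (i) := integral_mul_fderiv_eq_neg_fderiv_mul_of_integrable (hint1 i) (hint2 i)
    (hint3 i) (fun x _ ↦ hq.differentiable one_ne_zero x)
    (fun x _ ↦ (hXi i).differentiable one_ne_zero x)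
  have hexpand (x) : fderiv ℝ q x (X x) = ∑ i, fderiv ℝ q x (b i) * b.coord i (X x) := by
    conv_lhs => rw [← b.sum_repr (X x), map_sum]
    exact Finset.sum_congr rfl fun i _ ↦ by
      rw [map_smul, smul_eq_mul, mul_comm, Module.Basis.coord_apply]
  simp_rw [hexpand, divergence_eq_sum_coord b (hX.differentiable one_ne_zero _), Finset.mul_sum]
  rw [integral_finsetSum _ fun i _ ↦ hint1 i, integral_finsetSum _ fun i _ ↦ hint2 i,
    ← Finset.sum_neg_distrib]
  exact Finset.sum_congr rfl fun i _ ↦ by rw [hparts i, neg_neg]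

/-- Test the divergence of `X` against `‖h‖ ^ 2` and use `|D ‖h‖ ^ 2| ≤ 2 ‖h‖ ‖D h‖`. -/
lemma integral_norm_sq_mul_divergence_le {F : Type*} [NormedAddCommGroup F]
    [InnerProductSpace ℝ F] {h : E → F} {X : E → E} (hh : ContDiff ℝ 1 h)
    (hc : HasCompactSupport h) (hX : ContDiff ℝ 1 X) :
    ∫ x, ‖h x‖ ^ 2 * divergence X x ∂μ ≤ 2 * ∫ x, ‖h x‖ * ‖fderiv ℝ h x‖ * ‖X x‖ ∂μ := by
  have hsq : HasCompactSupport fun x ↦ ‖h x‖ ^ 2 :=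
    hc.norm.comp_left (g := fun t : ℝ ↦ t ^ 2) (by simp)
  have hdsq : ContDiff ℝ 1 fun x ↦ ‖h x‖ ^ 2 := hh.norm_sq ℝ
  rw [← neg_neg (∫ x, ‖h x‖ ^ 2 * divergence X x ∂μ),
    ← integral_fderiv_apply_eq_neg_integral_mul_divergence hdsq hsq hX, ← integral_neg,
    ← integral_const_mul]
  refine integral_mono ?_ ?_ fun x ↦ ?_
  · exact (((hdsq.continuous_fderiv one_ne_zero).clm_apply hX.continuous).neg)
      |>.integrable_of_hasCompactSupport
        ((hsq.fderiv (𝕜 := ℝ)).mono' fun x hx ↦ subset_tsupport _ fun h0 ↦ hx (by simp [h0]))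
  · have := hh.continuous
    have := hh.continuous_fderiv one_ne_zero
    have := hX.continuous
    exact (by fun_prop : Continuous fun x ↦ 2 * (‖h x‖ * ‖fderiv ℝ h x‖ * ‖X x‖))
      |>.integrable_of_hasCompactSupport (hc.norm.mul_right.mul_right.mul_left)
  · have hderiv := ((hh.differentiable one_ne_zero x).hasFDerivAt.norm_sq).fderiv
    calc -fderiv ℝ (fun x ↦ ‖h x‖ ^ 2) x (X x) = -(2 * ⟪h x, fderiv ℝ h x (X x)⟫_ℝ) := by
          rw [hderiv]; simp
      _ ≤ 2 * |⟪h x, fderiv ℝ h x (X x)⟫_ℝ| := by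
          linarith [neg_abs_le ⟪h x, fderiv ℝ h x (X x)⟫_ℝ]
      _ ≤ 2 * (‖h x‖ * (‖fderiv ℝ h x‖ * ‖X x‖)) := by
          gcongr
          exact (abs_real_inner_le_norm _ _).trans (by gcongr; exact (fderiv ℝ h x).le_opNorm _)
      _ = 2 * (‖h x‖ * ‖fderiv ℝ h x‖ * ‖X x‖) := by ring

end NormedSpace

section InnerProductSpace

variable [InnerProductSpace ℝ E]

lemma neg_two_mul_inner_le {α : ℝ} (hα : 0 < α) (a b : ℝ) (v w : E) :
    -2 * (a * b * ⟪v, w⟫_ℝ) ≤ α⁻¹ * (a ^ 2 * ‖w‖ ^ 2) + α * (b ^ 2 * ‖v‖ ^ 2) := by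
  have hsq : 0 ≤ α⁻¹ * ‖a • w + (α * b) • v‖ ^ 2 := by positivity
  rw [norm_add_sq_real, norm_smul, norm_smul, real_inner_smul_left, real_inner_smul_right,
    real_inner_comm, mul_pow, mul_pow, Real.norm_eq_abs, Real.norm_eq_abs, sq_abs, sq_abs] at hsq
  have : α⁻¹ * (a ^ 2 * ‖w‖ ^ 2 + 2 * (a * (α * b * ⟪v, w⟫_ℝ)) + (α * b) ^ 2 * ‖v‖ ^ 2) =
      α⁻¹ * (a ^ 2 * ‖w‖ ^ 2) + 2 * (a * b * ⟪v, w⟫_ℝ) + α * (b ^ 2 * ‖v‖ ^ 2) := by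
    field_simp
  linarith

section CompleteSpace

variable [CompleteSpace E]

lemma norm_gradient (f : E → ℝ) (x : E) : ‖∇ f x‖ = ‖fderiv ℝ f x‖ := by
  rw [← toDual_gradient, LinearIsometryEquiv.norm_map]

lemma gradient_eq_zero_of_notMem_tsupport {f : E → ℝ} {x : E} (hx : x ∉ tsupport f) :
    ∇ f x = 0 := by
  rw [← norm_eq_zero, norm_gradient, fderiv_of_notMem_tsupport (𝕜 := ℝ) hx, norm_zero]

lemma contDiff_gradient {f : E → ℝ} {m n : WithTop ℕ∞} (hf : ContDiff ℝ n f) (hmn : m + 1 ≤ n) :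
    ContDiff ℝ m (∇ f) :=
  (InnerProductSpace.toDual ℝ E).symm.contDiff.comp (hf.fderiv_right hmn)

lemma continuous_gradient {f : E → ℝ} (hf : ContDiff ℝ 1 f) : Continuous (∇ f) :=
  (contDiff_gradient (m := 0) hf (by simp)).continuous

lemma inner_fderiv_gradient {f : E → ℝ} (hf : ContDiff ℝ 2 f) (x v w : E) :
    ⟪fderiv ℝ (∇ f) x v, w⟫_ℝ = fderiv ℝ (fderiv ℝ f) x v w := by
  have hgrad := (contDiff_gradient (m := 1) hf (by norm_num)).differentiable one_ne_zero x
  have hderiv := (hf.fderiv_right (m := 1) (by norm_num)).differentiable one_ne_zero x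
  have hinner := fderiv_inner_apply ℝ hgrad (differentiableAt_const w) v
  have hclm := fderiv_clm_apply hderiv (differentiableAt_const w)
  simp_rw [inner_gradient_left] at hinner
  simpa [hclm] using hinner.symm

lemma hasGradientAt_sq_mul {η ψ : E → ℝ} {x : E} (hη : DifferentiableAt ℝ η x)
    (hψ : DifferentiableAt ℝ ψ x) :
    HasGradientAt (fun y ↦ η y ^ 2 * ψ y) (η x ^ 2 • ∇ ψ x + (2 * η x * ψ x) • ∇ η x) x := by
  rw [hasGradientAt_iff_hasFDerivAt]
  refine ((hη.hasFDerivAt.pow 2).mul hψ.hasFDerivAt).congr_fderiv ?_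
  ext y
  simp
  ring

end CompleteSpace

variable [FiniteDimensional ℝ E]

lemma divergence_gradient {f : E → ℝ} (hf : ContDiff ℝ 2 f) (x : E) :
    divergence (∇ f) x = Δ f x := by
  rw [divergence, LinearMap.trace_eq_sum_inner _ (stdOrthonormalBasis ℝ E),
    InnerProductSpace.laplacian_eq_iteratedFDeriv_stdOrthonormalBasis]
  refine Finset.sum_congr rfl fun i _ ↦ ?_
  rw [iteratedFDeriv_two_apply, real_inner_comm, ContinuousLinearMap.coe_coe,
    inner_fderiv_gradient hf]
  simp

variable [MeasurableSpace E] [BorelSpace E] {μ : Measure E} [μ.IsAddHaarMeasure]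

lemma integral_inner_gradient_eq_neg_integral_mul_laplacian {q S : E → ℝ} (hq : ContDiff ℝ 1 q)
    (hc : HasCompactSupport q) (hS : ContDiff ℝ 2 S) :
    ∫ x, ⟪∇ q x, ∇ S x⟫_ℝ ∂μ = -∫ x, q x * Δ S x ∂μ := by
  simp_rw [inner_gradient_left, ← divergence_gradient hS]
  exact integral_fderiv_apply_eq_neg_integral_mul_divergence hq hc
    (contDiff_gradient (m := 1) hS (by norm_num))

section Subharmonic

variable {η ψ S L : E → ℝ}

lemma integral_sq_mul_inner_gradient (hη : ContDiff ℝ 1 η)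
    (hc : HasCompactSupport η) (hψ : ContDiff ℝ 1 ψ) (hS : ContDiff ℝ 2 S) :
    ∫ x, η x ^ 2 * ⟪∇ ψ x, ∇ S x⟫_ℝ ∂μ =
      -(∫ x, η x ^ 2 * ψ x * Δ S x ∂μ) - 2 * ∫ x, η x * ψ x * ⟪∇ η x, ∇ S x⟫_ℝ ∂μ := by
  have hηψ : HasCompactSupport fun x ↦ η x ^ 2 * ψ x :=
    .intro hc fun x hx ↦ by simp [image_eq_zero_of_notMem_tsupport hx]
  have hgrad (x) : ⟪∇ (fun y ↦ η y ^ 2 * ψ y) x, ∇ S x⟫_ℝ =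
      η x ^ 2 * ⟪∇ ψ x, ∇ S x⟫_ℝ + 2 * (η x * ψ x * ⟪∇ η x, ∇ S x⟫_ℝ) := by
    rw [(hasGradientAt_sq_mul (hη.differentiable one_ne_zero x)
      (hψ.differentiable one_ne_zero x)).gradient, inner_add_left, real_inner_smul_left,
      real_inner_smul_left]
    ring
  have hcη := hη.continuous
  have hcψ := hψ.continuous
  have hgη := continuous_gradient hη
  have hgψ := continuous_gradient hψ
  have hgS := continuous_gradient (hS.of_le one_le_two)
  have hgreen := integral_inner_gradient_eq_neg_integral_mul_laplacian (μ := μ)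
    ((hη.pow 2).mul hψ) hηψ hS
  simp_rw [hgrad] at hgreen
  rw [integral_add, integral_const_mul] at hgreen
  · linarith
  · exact Continuous.integrable_of_hasCompactSupport (by fun_prop) <| .intro hc fun x hx ↦ by
      rw [image_eq_zero_of_notMem_tsupport hx, zero_pow two_ne_zero, zero_mul]
  · exact Continuous.integrable_of_hasCompactSupport (by fun_prop) <| .intro hc fun x hx ↦ by
      rw [image_eq_zero_of_notMem_tsupport hx, zero_mul, zero_mul, mul_zero]

lemma integral_sq_mul_inner_gradient_le (hη : ContDiff ℝ 1 η)
    (hc : HasCompactSupport η) (hψ : ContDiff ℝ 1 ψ) (hS : ContDiff ℝ 2 S)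
    (hψ0 : ∀ x ∈ tsupport η, 0 ≤ ψ x) (hS0 : ∀ x ∈ tsupport η, 0 ≤ Δ S x) :
    ∫ x, η x ^ 2 * ⟪∇ ψ x, ∇ S x⟫_ℝ ∂μ ≤ -2 * ∫ x, η x * ψ x * ⟪∇ η x, ∇ S x⟫_ℝ ∂μ := by
  have hnonneg : 0 ≤ ∫ x, η x ^ 2 * ψ x * Δ S x ∂μ := by
    refine integral_nonneg fun x ↦ ?_
    by_cases hx : x ∈ tsupport η
    · exact mul_nonneg (mul_nonneg (sq_nonneg _) (hψ0 x hx)) (hS0 x hx)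
    · simp [image_eq_zero_of_notMem_tsupport hx]
  rw [integral_sq_mul_inner_gradient hη hc hψ hS]
  linarith

lemma neg_two_mul_integral_inner_gradient_le {α : ℝ} (hα : 0 < α) (hη : ContDiff ℝ 1 η)
    (hc : HasCompactSupport η) (hψ : Continuous ψ) (hS : ContDiff ℝ 1 S) :
    -2 * ∫ x, η x * ψ x * ⟪∇ η x, ∇ S x⟫_ℝ ∂μ ≤
      α⁻¹ * (∫ x, η x ^ 2 * ‖∇ S x‖ ^ 2 ∂μ) + α * ∫ x, ψ x ^ 2 * ‖∇ η x‖ ^ 2 ∂μ := by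
  have hcη := hη.continuous
  have hgη := continuous_gradient hη
  have hgS := continuous_gradient hS
  have hint {g : E → ℝ} (hg : Continuous g) (h0 : ∀ x, η x = 0 → ∇ η x = 0 → g x = 0) :
      Integrable g μ := hg.integrable_of_hasCompactSupport <| .intro hc fun x hx ↦
    h0 x (image_eq_zero_of_notMem_tsupport hx) (gradient_eq_zero_of_notMem_tsupport hx)
  have hint1 : Integrable (fun x ↦ η x ^ 2 * ‖∇ S x‖ ^ 2) μ :=
    hint (by fun_prop) (by simp +contextual)
  have hint2 : Integrable (fun x ↦ ψ x ^ 2 * ‖∇ η x‖ ^ 2) μ :=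
    hint (by fun_prop) (by simp +contextual)
  have hint3 : Integrable (fun x ↦ η x * ψ x * ⟪∇ η x, ∇ S x⟫_ℝ) μ :=
    hint (by fun_prop) (by simp +contextual)
  simp_rw [← integral_const_mul]
  rw [← integral_add (hint1.const_mul _) (hint2.const_mul _)]
  exact integral_mono (hint3.const_mul _) ((hint1.const_mul _).add (hint2.const_mul _))
    fun x ↦ neg_two_mul_inner_le hα _ _ _ _

/-- **Caccioppoli's inequality**. -/
lemma integral_sq_mul_norm_gradient_sq_le (hη : ContDiff ℝ 1 η) (hc : HasCompactSupport η)
    (hS : ContDiff ℝ 2 S) (hS0 : ∀ x ∈ tsupport η, 0 ≤ S x)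
    (hΔ : ∀ x ∈ tsupport η, 0 ≤ Δ S x) :
    ∫ x, η x ^ 2 * ‖∇ S x‖ ^ 2 ∂μ ≤ 4 * ∫ x, S x ^ 2 * ‖∇ η x‖ ^ 2 ∂μ := by
  have hS1 := hS.of_le one_le_two
  have hself := integral_sq_mul_inner_gradient_le (μ := μ) hη hc hS1 hS hS0 hΔ
  have hyoung := neg_two_mul_integral_inner_gradient_le (μ := μ) two_pos hη hc hS.continuous hS1
  simp_rw [real_inner_self_eq_norm_sq] at hself
  linarith

/-- Testing `Δ S ≥ 0` against `η² L` bounds the mixed term, and Caccioppoli's inequality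
absorbs the gradient of `S`. -/
lemma integral_mul_sq_mul_neg_laplacian_le {α : ℝ} (hα : 0 < α) (hη : ContDiff ℝ 1 η)
    (hc : HasCompactSupport η) (hS : ContDiff ℝ 2 S) (hL : ContDiff ℝ 2 L)
    (hS0 : ∀ x ∈ tsupport η, 0 ≤ S x) (hL0 : ∀ x ∈ tsupport η, 0 ≤ L x)
    (hΔ : ∀ x ∈ tsupport η, 0 ≤ Δ S x) :
    ∫ x, S x * η x ^ 2 * -Δ L x ∂μ ≤
      4 / α * (∫ x, S x ^ 2 * ‖∇ η x‖ ^ 2 ∂μ) + α * (∫ x, L x ^ 2 * ‖∇ η x‖ ^ 2 ∂μ) +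
        2 * ∫ x, η x * S x * ⟪∇ η x, ∇ L x⟫_ℝ ∂μ := by
  have hS1 := hS.of_le one_le_two
  have hmixed := integral_sq_mul_inner_gradient_le (μ := μ) hη hc (hL.of_le one_le_two) hS hL0 hΔ
  have hyoung := neg_two_mul_integral_inner_gradient_le (μ := μ) hα hη hc hL.continuous hS1
  have hcacc : α⁻¹ * (∫ x, η x ^ 2 * ‖∇ S x‖ ^ 2 ∂μ) ≤
      4 / α * ∫ x, S x ^ 2 * ‖∇ η x‖ ^ 2 ∂μ := by
    rw [div_eq_inv_mul, mul_assoc]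
    gcongr
    exact integral_sq_mul_norm_gradient_sq_le hη hc hS hS0 hΔ
  have hLΔ := integral_sq_mul_inner_gradient (μ := μ) hη hc hS1 hL
  simp_rw [fun x ↦ real_inner_comm (∇ L x) (∇ S x), mul_comm (η _ ^ 2) (S _)] at hLΔ
  simp_rw [mul_neg, integral_neg]
  linarith

end Subharmonic

end InnerProductSpace

end Divergence

section Hardy

variable {E F : Type*} [NormedAddCommGroup E]

/-- The regularization `(‖t - z‖ ^ 2 + s ^ 2)^(-1/2)` of the inverse distance to `z`, as a function
of `t`. It is smooth for `s ≠ 0`. -/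
noncomputable def regInvDist (z : E) (s : ℝ) (t : E) : ℝ := (√(‖t - z‖ ^ 2 + s ^ 2))⁻¹

namespace regInvDist

variable {z t : E} {s : ℝ}

lemma nonneg (z : E) (s : ℝ) (t : E) : 0 ≤ regInvDist z s t := by
  unfold regInvDist
  positivity

lemma pos (hs : s ≠ 0) (z t : E) : 0 < regInvDist z s t := by
  unfold regInvDist
  positivity

lemma sq_mul_add_eq_one (hs : s ≠ 0) (z t : E) :
    regInvDist z s t ^ 2 * (‖t - z‖ ^ 2 + s ^ 2) = 1 := by
  have : 0 < ‖t - z‖ ^ 2 + s ^ 2 := by positivity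
  rw [regInvDist, inv_pow, Real.sq_sqrt this.le, inv_mul_cancel₀ this.ne']

lemma mul_norm_sub_le_one (hs : s ≠ 0) (z t : E) : regInvDist z s t * ‖t - z‖ ≤ 1 := by
  refine (sq_le_one_iff₀ (mul_nonneg (nonneg z s t) (norm_nonneg _))).1 ?_
  nlinarith [sq_mul_add_eq_one hs z t, sq_nonneg (regInvDist z s t * s)]

lemma one_le_two_mul_mul {r : ℝ} (hs : 0 < s) (hsr : s ≤ r) (ht : ‖t - z‖ ≤ r) :
    1 ≤ 2 * r * regInvDist z s t := by
  rw [regInvDist, ← div_eq_mul_inv, one_le_div (by positivity)]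
  refine Real.sqrt_le_iff.2 ⟨by linarith, ?_⟩
  nlinarith [norm_nonneg (t - z)]

variable [InnerProductSpace ℝ E]

lemma contDiff (hs : s ≠ 0) (z : E) {n : WithTop ℕ∞} : ContDiff ℝ n (regInvDist z s) := by
  have hpos (t : E) : ‖t - z‖ ^ 2 + s ^ 2 ≠ 0 := by positivity
  exact ((((contDiff_id.sub contDiff_const).norm_sq ℝ).add contDiff_const).sqrt hpos).inv
    fun t ↦ (Real.sqrt_ne_zero'.2 (by positivity))

lemma continuous (hs : s ≠ 0) (z : E) : Continuous (regInvDist z s) :=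
  (contDiff hs z (n := 0)).continuous

lemma hasFDerivAt (hs : s ≠ 0) (z t : E) :
    HasFDerivAt (regInvDist z s) (-regInvDist z s t ^ 3 • innerSL ℝ (t - z)) t := by
  have hpos : 0 < ‖t - z‖ ^ 2 + s ^ 2 := by positivity
  have hsq := ((hasFDerivAt_id t).sub_const z).norm_sq.add_const (s ^ 2)
  have hinv := (hasDerivAt_inv (Real.sqrt_ne_zero'.2 hpos)).comp_hasFDerivAt t (hsq.sqrt hpos.ne')
  refine hinv.congr_fderiv ?_
  ext y
  simp only [id_eq, regInvDist, smul_apply, ContinuousLinearMap.comp_apply, smul_eq_mul,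
    nsmul_eq_mul, Nat.cast_ofNat, innerSL_apply_apply, ContinuousLinearMap.id_apply]
  field_simp

lemma contDiff_log {c : ℝ} (hc : c ≠ 0) (hs : s ≠ 0) (z : E) {n : WithTop ℕ∞} :
    ContDiff ℝ n fun t ↦ Real.log (c * regInvDist z s t) :=
  (contDiff_const.mul (contDiff hs z)).log fun t ↦ mul_ne_zero hc (pos hs z t).ne'

variable [FiniteDimensional ℝ E]

lemma divergence_smul_sub (hs : s ≠ 0) (z t : E) :
    divergence (fun y ↦ regInvDist z s y • (y - z)) t =
      Module.finrank ℝ E * regInvDist z s t - ‖t - z‖ ^ 2 * regInvDist z s t ^ 3 := by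
  rw [divergence_smul (hasFDerivAt hs z t).differentiableAt (by fun_prop), divergence_sub_const,
    (hasFDerivAt hs z t).fderiv, smul_apply, innerSL_apply_apply, real_inner_self_eq_norm_sq,
    smul_eq_mul]
  ring

lemma gradient_log {c : ℝ} (hc : c ≠ 0) (hs : s ≠ 0) (z t : E) :
    ∇ (fun y ↦ Real.log (c * regInvDist z s y)) t = -regInvDist z s t ^ 2 • (t - z) := by
  have hW := (pos hs z t).ne'
  refine HasGradientAt.gradient (hasGradientAt_iff_hasFDerivAt.2 ?_)
  refine (((hasFDerivAt hs z t).const_mul c).log (mul_ne_zero hc hW)).congr_fderiv ?_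
  ext y
  simp
  field_simp

lemma norm_gradient_log_le {c : ℝ} (hc : c ≠ 0) (hs : s ≠ 0) (z t : E) :
    ‖∇ (fun y ↦ Real.log (c * regInvDist z s y)) t‖ ≤ regInvDist z s t := by
  rw [gradient_log hc hs, norm_smul, norm_neg, Real.norm_of_nonneg (sq_nonneg _), sq, mul_assoc]
  exact mul_le_of_le_one_right (nonneg z s t) (mul_norm_sub_le_one hs z t)

lemma laplacian_log {c : ℝ} (hc : c ≠ 0) (hs : s ≠ 0) (z t : E) :
    Δ (fun y ↦ Real.log (c * regInvDist z s y)) t =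
      2 * ‖t - z‖ ^ 2 * regInvDist z s t ^ 4 - Module.finrank ℝ E * regInvDist z s t ^ 2 := by
  have hW2 : HasFDerivAt (fun y ↦ -regInvDist z s y ^ 2) _ t := ((hasFDerivAt hs z t).pow 2).neg
  rw [← divergence_gradient (contDiff_log hc hs z), funext (gradient_log hc hs z),
    divergence_smul hW2.differentiableAt (by fun_prop), divergence_sub_const, hW2.fderiv]
  simp only [neg_apply, smul_apply, innerSL_apply_apply, real_inner_self_eq_norm_sq, smul_eq_mul,
    nsmul_eq_mul, Nat.cast_ofNat]
  ring

end regInvDist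

variable [InnerProductSpace ℝ E] [FiniteDimensional ℝ E] [NormedAddCommGroup F]
  [InnerProductSpace ℝ F] [MeasurableSpace E] [BorelSpace E] {μ : Measure E}
  [μ.IsAddHaarMeasure] {h : E → F}

lemma finrank_mul_integral_norm_sq_le {z : E} {R : ℝ} (hh : ContDiff ℝ 1 h)
    (hc : HasCompactSupport h) (hsupp : Function.support h ⊆ closedBall z R) :
    Module.finrank ℝ E * ∫ x, ‖h x‖ ^ 2 ∂μ ≤ 2 * R * ∫ x, ‖h x‖ * ‖fderiv ℝ h x‖ ∂μ := by
  have hch := hh.continuous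
  have := hh.continuous_fderiv one_ne_zero
  have hdiv := integral_norm_sq_mul_divergence_le (μ := μ) hh hc
    (contDiff_id.sub (contDiff_const (c := z)))
  simp_rw [id, divergence_sub_const] at hdiv
  rw [integral_mul_const, mul_comm] at hdiv
  rw [mul_assoc, ← integral_const_mul R]
  refine hdiv.trans (mul_le_mul_of_nonneg_left (integral_mono ?_ ?_ fun x ↦ ?_) zero_le_two)
  · exact Continuous.integrable_of_hasCompactSupport (by fun_prop) hc.norm.mul_right.mul_right
  · exact Continuous.integrable_of_hasCompactSupport (by fun_prop) hc.norm.mul_right.mul_left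
  · rw [mul_comm R]
    by_cases hx : h x = 0
    · simp [hx]
    · dsimp only
      gcongr
      exact mem_closedBall_iff_norm.1 (hsupp hx)

/-- **Poincaré's inequality**. -/
lemma integral_norm_sq_le_integral_norm_fderiv_sq [Nontrivial E] {z : E} {R : ℝ}
    (hh : ContDiff ℝ 1 h) (hc : HasCompactSupport h)
    (hsupp : Function.support h ⊆ closedBall z R) :
    ∫ x, ‖h x‖ ^ 2 ∂μ ≤ (2 * R / Module.finrank ℝ E) ^ 2 * ∫ x, ‖fderiv ℝ h x‖ ^ 2 ∂μ := by
  have hdiv := finrank_mul_integral_norm_sq_le (μ := μ) hh hc hsupp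
  have hn : (0 : ℝ) < Module.finrank ℝ E := mod_cast Module.finrank_pos
  generalize (Module.finrank ℝ E : ℝ) = n at hdiv hn ⊢
  have hch := hh.continuous
  have := hh.continuous_fderiv one_ne_zero
  have hint1 : Integrable (fun x ↦ ‖h x‖ ^ 2) μ :=
    Continuous.integrable_of_hasCompactSupport (by fun_prop)
      (hc.norm.comp_left (g := (· ^ 2)) (by simp))
  have hint2 : Integrable (fun x ↦ ‖fderiv ℝ h x‖ ^ 2) μ :=
    Continuous.integrable_of_hasCompactSupport (by fun_prop)
      ((hc.fderiv (𝕜 := ℝ)).norm.comp_left (g := (· ^ 2)) (by simp))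
  have hint3 : Integrable (fun x ↦ ‖h x‖ * ‖fderiv ℝ h x‖) μ :=
    Continuous.integrable_of_hasCompactSupport (by fun_prop) hc.norm.mul_right
  have hsq : 0 ≤ ∫ x, (n / 2 * ‖h x‖ - R * ‖fderiv ℝ h x‖) ^ 2 ∂μ :=
    integral_nonneg fun x ↦ sq_nonneg _
  have hexp : ∫ x, (n / 2 * ‖h x‖ - R * ‖fderiv ℝ h x‖) ^ 2 ∂μ =
      n ^ 2 / 4 * (∫ x, ‖h x‖ ^ 2 ∂μ) + R ^ 2 * (∫ x, ‖fderiv ℝ h x‖ ^ 2 ∂μ) -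
        n * R * ∫ x, ‖h x‖ * ‖fderiv ℝ h x‖ ∂μ := by
    simp_rw [← integral_const_mul]
    rw [← integral_add (hint1.const_mul _) (hint2.const_mul _), ← integral_sub]
    · exact integral_congr_ae (.of_forall fun x ↦ by ring)
    · exact (hint1.const_mul _).add (hint2.const_mul _)
    · exact hint3.const_mul _
  rw [div_pow, mul_pow, div_mul_eq_mul_div, le_div_iff₀ (by positivity)]
  linarith [mul_le_mul_of_nonneg_left hdiv hn.le]

/-- **Hardy's inequality**, from the vector field `(x - z) / |x - z|`. -/
lemma finrank_sub_one_mul_integral_norm_sq_mul_regInvDist_le {s : ℝ} (hs : s ≠ 0) (z : E)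
    (hh : ContDiff ℝ 1 h) (hc : HasCompactSupport h) :
    (Module.finrank ℝ E - 1) * ∫ x, ‖h x‖ ^ 2 * regInvDist z s x ∂μ ≤
      2 * ∫ x, ‖h x‖ * ‖fderiv ℝ h x‖ ∂μ := by
  have hch := hh.continuous
  have := hh.continuous_fderiv one_ne_zero
  have hcW := regInvDist.continuous hs z
  have hX : ContDiff ℝ 1 fun y ↦ regInvDist z s y • (y - z) :=
    (regInvDist.contDiff hs z).smul (contDiff_id.sub contDiff_const)
  have := hX.continuous
  have hcdiv := continuous_divergence hX
  have hsq : HasCompactSupport fun x ↦ ‖h x‖ ^ 2 := hc.norm.comp_left (g := (· ^ 2)) (by simp)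
  rw [← integral_const_mul]
  refine (integral_mono ?_ ?_ fun x ↦ ?_).trans
    ((integral_norm_sq_mul_divergence_le (μ := μ) hh hc hX).trans
      (mul_le_mul_of_nonneg_left (integral_mono ?_ ?_ fun x ↦ ?_) zero_le_two))
  · exact Continuous.integrable_of_hasCompactSupport (by fun_prop) hsq.mul_right.mul_left
  · exact Continuous.integrable_of_hasCompactSupport (by fun_prop) hsq.mul_right
  · have hW := regInvDist.nonneg z s x
    have hcube := mul_le_of_le_one_right hW
      (pow_le_one₀ (n := 2) (by positivity) (regInvDist.mul_norm_sub_le_one hs z x))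
    simp only [regInvDist.divergence_smul_sub hs]
    calc _ = ‖h x‖ ^ 2 * (Module.finrank ℝ E * regInvDist z s x - regInvDist z s x) := by ring
      _ ≤ _ := by gcongr; linarith
  · exact Continuous.integrable_of_hasCompactSupport (by fun_prop) hc.norm.mul_right.mul_right
  · exact Continuous.integrable_of_hasCompactSupport (by fun_prop) hc.norm.mul_right
  · refine mul_le_of_le_one_right (by positivity) ?_
    rw [norm_smul, Real.norm_of_nonneg (regInvDist.nonneg z s x)]
    exact regInvDist.mul_norm_sub_le_one hs z x

end Hardy

section Dbar

open scoped ComplexConjugate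

/-- The Cauchy-Riemann operator `∂f/∂x + i ∂f/∂y`, which is twice the Wirtinger derivative of `f`
with respect to `z̄`. -/
noncomputable def dbar (f : ℂ → ℂ) (z : ℂ) : ℂ :=
  fderiv ℝ f z 1 + Complex.I * fderiv ℝ f z Complex.I

variable {f g h : ℂ → ℂ} {z : ℂ}

lemma dbar_add (hf : DifferentiableAt ℝ f z) (hg : DifferentiableAt ℝ g z) :
    dbar (f + g) z = dbar f z + dbar g z := by
  simp only [dbar, fderiv_add hf hg, add_apply]
  ring

lemma dbar_sub (hf : DifferentiableAt ℝ f z) (hg : DifferentiableAt ℝ g z) :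
    dbar (f - g) z = dbar f z - dbar g z := by
  simp only [dbar, fderiv_sub hf hg, sub_apply]
  ring

lemma dbar_const_smul (c : ℂ) (hf : DifferentiableAt ℝ f z) : dbar (c • f) z = c * dbar f z := by
  simp only [dbar, fderiv_const_smul hf, smul_apply, smul_eq_mul]
  ring

lemma dbar_mul (hf : DifferentiableAt ℝ f z) (hg : DifferentiableAt ℝ g z) :
    dbar (f * g) z = f z * dbar g z + dbar f z * g z := by
  simp only [dbar, fderiv_mul hf hg, add_apply, smul_apply, smul_eq_mul]
  ring

lemma differentiableAt_complex_iff_dbar_eq_zero :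
    DifferentiableAt ℂ f z ↔ DifferentiableAt ℝ f z ∧ dbar f z = 0 := by
  rw [differentiableAt_complex_iff_differentiableAt_real, dbar, add_comm]
  refine and_congr_right fun _ ↦ ?_
  rw [← mul_right_inj' Complex.I_ne_zero, smul_eq_mul, ← mul_assoc, Complex.I_mul_I, neg_one_mul,
    ← add_eq_zero_iff_eq_neg]

lemma dbar_eq_zero_of_differentiableAt (hf : DifferentiableAt ℂ f z) : dbar f z = 0 :=
  (differentiableAt_complex_iff_dbar_eq_zero.1 hf).2

lemma dbar_comp_sub_const (f : ℂ → ℂ) (w z : ℂ) : dbar (fun t ↦ f (t - w)) z = dbar f (z - w) := by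
  simp only [dbar, fderiv_comp_sub]

lemma dbar_comp_const_sub (hf : Differentiable ℝ f) (w z : ℂ) :
    dbar (fun t ↦ f (w - t)) z = -dbar f (w - z) := by
  have hcomp := ((hf (w - z)).hasFDerivAt.comp z ((hasFDerivAt_id z).const_sub w)).fderiv
  simp only [Function.comp_def] at hcomp
  simp only [dbar, hcomp, ContinuousLinearMap.comp_apply, neg_apply, ContinuousLinearMap.id_apply,
    map_neg]
  ring

lemma dbar_ofReal {f : ℂ → ℝ} (hf : DifferentiableAt ℝ f z) :
    dbar (fun t ↦ (f t : ℂ)) z = ∇ f z := by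
  have hcomp := (Complex.ofRealCLM.hasFDerivAt.comp z hf.hasFDerivAt).fderiv
  simp only [Function.comp_def, Complex.ofRealCLM_apply] at hcomp
  simp only [dbar, hcomp, ContinuousLinearMap.comp_apply, Complex.ofRealCLM_apply]
  apply Complex.ext <;> simp [← inner_gradient_left, Complex.inner]

lemma continuous_dbar (hf : ContDiff ℝ 1 f) : Continuous (dbar f) := by
  have := hf.continuous_fderiv one_ne_zero
  unfold dbar
  fun_prop

lemma support_dbar_subset (f : ℂ → ℂ) : Function.support (dbar f) ⊆ tsupport f := by
  intro t ht
  contrapose! ht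
  simp [dbar, fderiv_of_notMem_tsupport (𝕜 := ℝ) ht]

lemma hasCompactSupport_dbar (hf : HasCompactSupport f) : HasCompactSupport (dbar f) :=
  hf.mono' (support_dbar_subset f)

/-- Both sides are `-∫ B (h x) (D² h x v w)`. -/
lemma integral_bilinear_fderiv_fderiv_comm {E F G : Type*} [NormedAddCommGroup E] [NormedSpace ℝ E]
    [FiniteDimensional ℝ E] [MeasurableSpace E] [BorelSpace E] {μ : Measure E} [μ.IsAddHaarMeasure]
    [NormedAddCommGroup F] [NormedSpace ℝ F] [NormedAddCommGroup G] [NormedSpace ℝ G]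
    (B : F →L[ℝ] F →L[ℝ] G) {h : E → F} (hh : ContDiff ℝ 2 h) (hc : HasCompactSupport h) (v w : E) :
    ∫ x, B (fderiv ℝ h x v) (fderiv ℝ h x w) ∂μ = ∫ x, B (fderiv ℝ h x w) (fderiv ℝ h x v) ∂μ := by
  have hd1 : ContDiff ℝ 1 (fderiv ℝ h) := hh.fderiv_right (by norm_num)
  have hd0 := hh.continuous
  have := hd1.continuous_fderiv one_ne_zero
  have happly (v : E) (x : E) : HasFDerivAt (fun x ↦ fderiv ℝ h x v)
      ((ContinuousLinearMap.apply ℝ F v).comp (fderiv ℝ (fderiv ℝ h) x)) x :=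
    (ContinuousLinearMap.apply ℝ F v).hasFDerivAt.comp x
      (hd1.differentiable one_ne_zero x).hasFDerivAt
  have hparts (v w : E) : ∫ x, B (h x) (fderiv ℝ (fderiv ℝ h) x v w) ∂μ =
      -∫ x, B (fderiv ℝ h x v) (fderiv ℝ h x w) ∂μ := by
    refine integral_bilinear_hasFDerivAt_right_eq_neg_left_of_integrable ?_ ?_ ?_
      (fun x _ ↦ (hh.differentiable two_ne_zero x).hasFDerivAt) fun x _ ↦ happly w x
    all_goals
      have := hd1.continuous
      refine Continuous.integrable_of_hasCompactSupport (by fun_prop) <| .intro hc fun x hx ↦ ?_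
      simp [fderiv_of_notMem_tsupport (𝕜 := ℝ) hx, image_eq_zero_of_notMem_tsupport hx]
  rw [← neg_inj, ← hparts, ← hparts]
  congr! 3 with x
  exact hh.contDiffAt.isSymmSndFDerivAt (by simp) v w

lemma norm_dbar_sq (h : ℂ → ℂ) (z : ℂ) :
    ‖dbar h z‖ ^ 2 = ‖fderiv ℝ h z 1‖ ^ 2 + ‖fderiv ℝ h z Complex.I‖ ^ 2 -
      2 * (conj (fderiv ℝ h z 1) * fderiv ℝ h z Complex.I).im := by
  simp only [dbar, ← Complex.normSq_eq_norm_sq, Complex.normSq_apply, Complex.add_re,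
    Complex.add_im, Complex.mul_re, Complex.mul_im, Complex.I_re, Complex.I_im, Complex.conj_re,
    Complex.conj_im]
  ring

lemma integral_im_conj_fderiv_mul_fderiv_eq_zero (hh : ContDiff ℝ 2 h) (hc : HasCompactSupport h)
    (v w : ℂ) : ∫ t, (conj (fderiv ℝ h t v) * fderiv ℝ h t w).im = 0 := by
  have hd := hh.continuous_fderiv two_ne_zero
  have hcomm := congr_arg Complex.im <| integral_bilinear_fderiv_fderiv_comm (μ := volume)
    ((ContinuousLinearMap.mul ℝ ℂ).comp Complex.conjCLE.toContinuousLinearMap) hh hc v w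
  have him (v w : ℂ) : (∫ t, conj (fderiv ℝ h t v) * fderiv ℝ h t w).im =
      ∫ t, (conj (fderiv ℝ h t v) * fderiv ℝ h t w).im :=
    (integral_im (𝕜 := ℂ) (Continuous.integrable_of_hasCompactSupport (by fun_prop) <| .intro hc
      fun t ht ↦ by simp [fderiv_of_notMem_tsupport (𝕜 := ℝ) ht])).symm
  have hantisymm : ∫ t, (conj (fderiv ℝ h t w) * fderiv ℝ h t v).im =
      -∫ t, (conj (fderiv ℝ h t v) * fderiv ℝ h t w).im := by
    rw [← integral_neg]
    refine integral_congr_ae <| ae_of_all _ fun t ↦ ?_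
    simp only [Complex.mul_im, Complex.conj_re, Complex.conj_im]
    ring
  replace hcomm := (him v w).symm.trans (hcomm.trans (him w v))
  linarith

lemma integral_norm_dbar_sq (hh : ContDiff ℝ 2 h) (hc : HasCompactSupport h) :
    ∫ t, ‖dbar h t‖ ^ 2 = ∫ t, (‖fderiv ℝ h t 1‖ ^ 2 + ‖fderiv ℝ h t Complex.I‖ ^ 2) := by
  have hd := hh.continuous_fderiv two_ne_zero
  simp_rw [norm_dbar_sq]
  rw [integral_sub, integral_const_mul, integral_im_conj_fderiv_mul_fderiv_eq_zero hh hc, mul_zero,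
    sub_zero]
  all_goals
    exact Continuous.integrable_of_hasCompactSupport (by fun_prop) <| .intro hc fun t ht ↦ by
      simp [fderiv_of_notMem_tsupport (𝕜 := ℝ) ht]

lemma norm_sq_le_norm_apply_one_sq_add {F : Type*} [NormedAddCommGroup F] [NormedSpace ℝ F]
    (L : ℂ →L[ℝ] F) : ‖L‖ ^ 2 ≤ ‖L 1‖ ^ 2 + ‖L Complex.I‖ ^ 2 := by
  rw [← Real.le_sqrt (norm_nonneg _) (by positivity)]
  refine L.opNorm_le_bound (Real.sqrt_nonneg _) fun z ↦ ?_
  have hz : L z = z.re • L 1 + z.im • L Complex.I := by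
    conv_lhs => rw [← Complex.re_add_im z, mul_comm, ← mul_one (z.re : ℂ), mul_comm Complex.I]
    simp only [← Complex.real_smul, map_add, map_smul]
  rw [← Real.sqrt_sq (norm_nonneg z), ← Real.sqrt_mul (by positivity), Complex.sq_norm,
    Complex.normSq_apply]
  refine Real.le_sqrt_of_sq_le ?_
  calc ‖L z‖ ^ 2 ≤ (|z.re| * ‖L 1‖ + |z.im| * ‖L Complex.I‖) ^ 2 := by
        gcongr
        simpa only [hz, norm_smul, Real.norm_eq_abs] using
          norm_add_le (z.re • L 1) (z.im • L Complex.I)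
    _ ≤ _ := by
        nlinarith [sq_nonneg (|z.re| * ‖L Complex.I‖ - |z.im| * ‖L 1‖), sq_abs z.re, sq_abs z.im]

lemma integral_norm_fderiv_sq_le_integral_norm_dbar_sq (hh : ContDiff ℝ 2 h)
    (hc : HasCompactSupport h) : ∫ t, ‖fderiv ℝ h t‖ ^ 2 ≤ ∫ t, ‖dbar h t‖ ^ 2 := by
  have hd := hh.continuous_fderiv two_ne_zero
  rw [integral_norm_dbar_sq hh hc]
  refine integral_mono ?_ ?_ fun t ↦ norm_sq_le_norm_apply_one_sq_add (fderiv ℝ h t)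
  all_goals
    exact Continuous.integrable_of_hasCompactSupport (by fun_prop) <| .intro hc fun t ht ↦ by
      simp [fderiv_of_notMem_tsupport (𝕜 := ℝ) ht]

end Dbar

section Cutoff

lemma deriv_smoothTransition_eq_zero_of_neg {u : ℝ} (hu : u < 0) :
    deriv Real.smoothTransition u = 0 := by
  have : Real.smoothTransition =ᶠ[𝓝 u] fun _ ↦ 0 := by
    filter_upwards [Iio_mem_nhds hu] with v hv using Real.smoothTransition.zero_of_nonpos hv.le
  rw [this.deriv_eq, deriv_const]

lemma deriv_smoothTransition_eq_zero_of_one_lt {u : ℝ} (hu : 1 < u) :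
    deriv Real.smoothTransition u = 0 := by
  have : Real.smoothTransition =ᶠ[𝓝 u] fun _ ↦ 1 := by
    filter_upwards [Ioi_mem_nhds hu] with v hv using Real.smoothTransition.one_of_one_le hv.le
  rw [this.deriv_eq, deriv_const]

lemma contDiff_deriv_smoothTransition : ContDiff ℝ ∞ (deriv Real.smoothTransition) :=
  (contDiff_infty_iff_deriv.1 Real.smoothTransition.contDiff).2

lemma exists_deriv_smoothTransition_le : ∃ C, 0 < C ∧ ∀ u, deriv Real.smoothTransition u ≤ C := by
  have hc : HasCompactSupport (deriv Real.smoothTransition) :=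
    .intro (isCompact_Icc (a := 0) (b := 1)) fun u hu ↦ by
      rw [mem_Icc, not_and_or, not_le, not_le] at hu
      exact hu.elim deriv_smoothTransition_eq_zero_of_neg deriv_smoothTransition_eq_zero_of_one_lt
  obtain ⟨C, hC⟩ := hc.exists_bound_of_continuous contDiff_deriv_smoothTransition.continuous
  exact ⟨max C 1, by positivity, fun u ↦ (le_abs_self _).trans ((hC u).trans (le_max_left C 1))⟩

variable {E : Type*} [NormedAddCommGroup E]

/-- A smooth radial cutoff equal to `1` for `‖x‖ ≤ δ` and to `0` for `2 * δ ≤ ‖x‖`. -/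
noncomputable def cutoff (δ : ℝ) (x : E) : ℝ := Real.smoothTransition (2 - ‖x‖ ^ 2 / δ ^ 2)

/-- The radial function `χ` with `∇ (cutoff δ) x = -χ x • x`; on `ℂ` it is an approximate identity
of mass `2 * π` as `δ → 0`. -/
noncomputable def cutoffKernel (δ : ℝ) (x : E) : ℝ :=
  2 / δ ^ 2 * deriv Real.smoothTransition (2 - ‖x‖ ^ 2 / δ ^ 2)

variable {δ : ℝ} {x : E}

lemma cutoff_nonneg (δ : ℝ) (x : E) : 0 ≤ cutoff δ x := Real.smoothTransition.nonneg _

lemma cutoff_le_one (δ : ℝ) (x : E) : cutoff δ x ≤ 1 := Real.smoothTransition.le_one _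

lemma cutoff_eq_one (hδ : 0 < δ) (hx : ‖x‖ ≤ δ) : cutoff δ x = 1 := by
  refine Real.smoothTransition.one_of_one_le ?_
  have : ‖x‖ ^ 2 / δ ^ 2 ≤ 1 := div_le_one_of_le₀ (by gcongr) (by positivity)
  linarith

lemma two_sub_norm_sq_div_sq_neg (hδ : 0 < δ) (hx : 2 * δ ≤ ‖x‖) : 2 - ‖x‖ ^ 2 / δ ^ 2 < 0 := by
  rw [sub_neg, lt_div_iff₀ (by positivity)]
  nlinarith

lemma cutoff_eq_zero (hδ : 0 < δ) (hx : 2 * δ ≤ ‖x‖) : cutoff δ x = 0 :=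
  Real.smoothTransition.zero_of_nonpos (two_sub_norm_sq_div_sq_neg hδ hx).le

lemma cutoffKernel_nonneg (δ : ℝ) (x : E) : 0 ≤ cutoffKernel δ x :=
  mul_nonneg (by positivity) Real.smoothTransition.monotone.deriv_nonneg

lemma cutoffKernel_eq_zero_of_norm_lt (hδ : 0 < δ) (hx : ‖x‖ < δ) : cutoffKernel δ x = 0 := by
  have : ‖x‖ ^ 2 / δ ^ 2 < 1 := (div_lt_one (by positivity)).2 (by gcongr)
  rw [cutoffKernel, deriv_smoothTransition_eq_zero_of_one_lt (by linarith), mul_zero]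

lemma cutoffKernel_eq_zero_of_le_norm (hδ : 0 < δ) (hx : 2 * δ ≤ ‖x‖) : cutoffKernel δ x = 0 := by
  rw [cutoffKernel, deriv_smoothTransition_eq_zero_of_neg (two_sub_norm_sq_div_sq_neg hδ hx),
    mul_zero]

lemma cutoffKernel_neg (δ : ℝ) (x : E) : cutoffKernel δ (-x) = cutoffKernel δ x := by
  simp only [cutoffKernel, norm_neg]

variable (E) in
lemma exists_cutoffKernel_le_div_sq :
    ∃ C, 0 < C ∧ ∀ δ (x : E), cutoffKernel δ x ≤ C / δ ^ 2 := by
  obtain ⟨C, hC, hle⟩ := exists_deriv_smoothTransition_le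
  refine ⟨2 * C, by positivity, fun δ x ↦ ?_⟩
  rw [mul_div_right_comm]
  exact mul_le_mul_of_nonneg_left (hle _) (by positivity)

section InnerProductSpace

variable [InnerProductSpace ℝ E]

lemma contDiff_cutoff (δ : ℝ) : ContDiff ℝ ∞ (cutoff δ : E → ℝ) :=
  Real.smoothTransition.contDiff.comp (contDiff_const.sub ((contDiff_norm_sq ℝ).div_const _))

lemma contDiff_cutoffKernel (δ : ℝ) : ContDiff ℝ ∞ (cutoffKernel δ : E → ℝ) :=
  contDiff_const.mul (contDiff_deriv_smoothTransition.comp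
    (contDiff_const.sub ((contDiff_norm_sq ℝ).div_const _)))

lemma hasFDerivAt_cutoff (δ : ℝ) (x : E) :
    HasFDerivAt (cutoff δ) (-cutoffKernel δ x • innerSL ℝ x) x := by
  have hinner := ((hasFDerivAt_id x).norm_sq.mul_const (δ ^ 2)⁻¹).const_sub 2
  have houter := (Real.smoothTransition.contDiff (n := 1)).differentiable one_ne_zero
    (2 - ‖x‖ ^ 2 * (δ ^ 2)⁻¹)
  refine ((houter.hasDerivAt.comp_hasFDerivAt x hinner).congr_fderiv ?_).congr_of_eventuallyEq
    (.of_forall fun y ↦ by simp [cutoff, div_eq_mul_inv])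
  ext y
  simp [cutoffKernel, div_eq_mul_inv]
  ring

variable [FiniteDimensional ℝ E]

lemma gradient_cutoff (δ : ℝ) (x : E) : ∇ (cutoff δ) x = -cutoffKernel δ x • x := by
  refine (hasGradientAt_iff_hasFDerivAt.2 ((hasFDerivAt_cutoff δ x).congr_fderiv ?_)).gradient
  ext y
  simp

end InnerProductSpace

lemma integral_cutoffKernel (hδ : 0 < δ) : ∫ x : ℂ, cutoffKernel δ x = 2 * Real.pi := by
  have hderiv : ∀ y : ℝ, HasDerivAt (fun y ↦ -cutoff δ y) (y * cutoffKernel δ y) y := fun y ↦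
    (hasFDerivAt_cutoff δ y).neg.hasDerivAt.congr_deriv (by simp [mul_comm])
  have hlim : Tendsto (fun y : ℝ ↦ -cutoff δ y) atTop (𝓝 0) := by
    refine tendsto_const_nhds.congr' ?_
    filter_upwards [eventually_ge_atTop (2 * δ)] with y hy
    rw [cutoff_eq_zero hδ (hy.trans (Real.le_norm_self y)), neg_zero]
  have hradial : ∫ y in Ioi (0 : ℝ), y * cutoffKernel δ y = 1 := by
    rw [integral_Ioi_of_hasDerivAt_of_nonneg' (fun y _ ↦ hderiv y)
      (fun y hy ↦ mul_nonneg (le_of_lt hy) (cutoffKernel_nonneg δ y)) hlim,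
      cutoff_eq_one hδ (by simpa using hδ.le)]
    norm_num
  have hpolar := integral_fun_norm_addHaar (volume : Measure ℂ) (cutoffKernel δ)
  have hnorm : ∀ x : ℂ, cutoffKernel δ ‖x‖ = cutoffKernel δ x := by simp [cutoffKernel]
  simp_rw [hnorm] at hpolar
  rw [hpolar, Complex.finrank_real_complex]
  simp [Measure.real, Complex.volume_ball, hradial]

end Cutoff

section CauchyKernel

variable {f : ℂ → ℂ} {δ δ' : ℝ}

lemma contDiff_div_id (hf : ContDiff ℝ ∞ f) (h0 : f =ᶠ[𝓝 0] 0) : ContDiff ℝ ∞ fun x ↦ f x / x := by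
  refine contDiff_iff_contDiffAt.2 fun x ↦ ?_
  obtain rfl | hx := eq_or_ne x 0
  · refine (contDiffAt_const (c := 0)).congr_of_eventuallyEq ?_
    filter_upwards [h0] with y hy
    simp [hy]
  · exact hf.contDiffAt.mul (contDiffAt_id.inv hx)

lemma dbar_div_id (hf : Differentiable ℝ f) (h0 : f =ᶠ[𝓝 0] 0) (x : ℂ) :
    dbar (fun y ↦ f y / y) x = dbar f x / x := by
  obtain rfl | hx := eq_or_ne x 0
  · have hzero : (fun y ↦ f y / y) =ᶠ[𝓝 0] 0 := h0.mono fun y hy ↦ by simp [hy]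
    simp [dbar, hzero.fderiv_eq, fderiv_zero]
  · have hinv : DifferentiableAt ℂ (fun y : ℂ ↦ y⁻¹) x := differentiableAt_inv hx
    have hmul := dbar_mul (hf x) (hinv.restrictScalars ℝ)
    rw [dbar_eq_zero_of_differentiableAt hinv, mul_zero, zero_add, ← div_eq_mul_inv] at hmul
    exact hmul

/-- The difference of the Cauchy kernel `1 / x` smoothly truncated at scales `δ` and `δ'`; it solves
`∂̄ u = χ_δ - χ_δ'` for the kernels `χ = cutoffKernel`. -/
noncomputable def cauchyCutoffSub (δ δ' : ℝ) (x : ℂ) : ℂ :=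
  ((cutoff δ' x - cutoff δ x : ℝ) : ℂ) / x

lemma cutoff_sub_cutoff_eventuallyEq_zero (hδ : 0 < δ) (hδ' : 0 < δ') :
    (fun x : ℂ ↦ ((cutoff δ' x - cutoff δ x : ℝ) : ℂ)) =ᶠ[𝓝 0] 0 := by
  filter_upwards [ball_mem_nhds 0 hδ, ball_mem_nhds 0 hδ'] with x hx hx'
  rw [mem_ball_zero_iff] at hx hx'
  simp [cutoff_eq_one hδ hx.le, cutoff_eq_one hδ' hx'.le]

lemma contDiff_ofReal_comp {E : Type*} [NormedAddCommGroup E] [NormedSpace ℝ E] {g : E → ℝ}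
    {n : ℕ∞ω} (hg : ContDiff ℝ n g) : ContDiff ℝ n fun x ↦ (g x : ℂ) :=
  Complex.ofRealCLM.contDiff.comp hg

lemma contDiff_cauchyCutoffSub (hδ : 0 < δ) (hδ' : 0 < δ') :
    ContDiff ℝ ∞ (cauchyCutoffSub δ δ') :=
  contDiff_div_id (contDiff_ofReal_comp ((contDiff_cutoff δ').sub (contDiff_cutoff δ)))
    (cutoff_sub_cutoff_eventuallyEq_zero hδ hδ')

lemma cauchyCutoffSub_eq_zero {x : ℂ} (hδ : 0 < δ) (hδ' : 0 < δ') (hx : 2 * δ ≤ ‖x‖)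
    (hx' : 2 * δ' ≤ ‖x‖) : cauchyCutoffSub δ δ' x = 0 := by
  simp [cauchyCutoffSub, cutoff_eq_zero hδ hx, cutoff_eq_zero hδ' hx']

lemma dbar_cauchyCutoffSub (hδ : 0 < δ) (hδ' : 0 < δ') (x : ℂ) :
    dbar (cauchyCutoffSub δ δ') x = cutoffKernel δ x - cutoffKernel δ' x := by
  have hdiff := fun ε : ℝ ↦ (contDiff_cutoff ε (E := ℂ)).differentiable (by simp)
  have hsub : ContDiff ℝ ∞ fun x : ℂ ↦ cutoff δ' x - cutoff δ x :=
    (contDiff_cutoff δ').sub (contDiff_cutoff δ)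
  rw [show cauchyCutoffSub δ δ' = fun y ↦ ((cutoff δ' y - cutoff δ y : ℝ) : ℂ) / y from rfl,
    dbar_div_id ((contDiff_ofReal_comp hsub).differentiable (by simp))
      (cutoff_sub_cutoff_eventuallyEq_zero hδ hδ'), dbar_ofReal (hsub.differentiable (by simp) x)]
  have hgrad : ∇ (fun y : ℂ ↦ cutoff δ' y - cutoff δ y) x
      = (cutoffKernel δ x - cutoffKernel δ' x) • x := by
    have hsum := hasGradientAt_iff_hasFDerivAt.1 (hdiff δ' x).hasGradientAt |>.sub <|
      hasGradientAt_iff_hasFDerivAt.1 (hdiff δ x).hasGradientAt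
    rw [gradient_cutoff, gradient_cutoff, ← map_sub] at hsum
    exact (hasGradientAt_iff_hasFDerivAt.2 hsum).gradient.trans (by module)
  rw [hgrad]
  obtain rfl | hx := eq_or_ne x 0
  · simp [cutoffKernel_eq_zero_of_norm_lt, hδ, hδ']
  · rw [Complex.real_smul, mul_div_cancel_right₀ _ hx, Complex.ofReal_sub]

end CauchyKernel

section Weyl

open scoped Convolution Distributions

variable {f : ℂ → ℂ} {Ω : TopologicalSpace.Opens ℂ} {z : ℂ} {δ δ' : ℝ}

/-- `f` solves the Cauchy-Riemann equation on `Ω` in the sense of distributions. -/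
def IsWeaklyHolomorphicOn (f : ℂ → ℂ) (Ω : TopologicalSpace.Opens ℂ) : Prop :=
  ∀ φ : 𝓓(Ω, ℂ), ∫ t, f t * dbar φ t = 0

lemma exists_testFunction_coe_eq {φ : ℂ → ℂ} {K : Set ℂ} (hφ : ContDiff ℝ ∞ φ) (hK : IsCompact K)
    (hKΩ : K ⊆ Ω) (hφK : ∀ t ∉ K, φ t = 0) : ∃ ψ : 𝓓(Ω, ℂ), ⇑ψ = φ :=
  ⟨⟨φ, hφ, .intro hK fun _ ↦ hφK _, (closure_minimal (fun _ ht ↦ by_contra fun h ↦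
    Function.mem_support.1 ht (hφK _ h)) hK.isClosed).trans hKΩ⟩, rfl⟩

lemma hasCompactSupport_ofReal_cutoffKernel (hδ : 0 < δ) :
    HasCompactSupport fun x : ℂ ↦ (cutoffKernel δ x : ℂ) :=
  .intro (isCompact_closedBall 0 (2 * δ)) fun x hx ↦ by
    rw [mem_closedBall_zero_iff, not_le] at hx
    rw [cutoffKernel_eq_zero_of_le_norm hδ hx.le, Complex.ofReal_zero]

lemma cutoffKernel_sub_eq_zero (hδ : 0 < δ) {t : ℂ} (ht : t ∉ closedBall z (2 * δ)) :
    cutoffKernel δ (t - z) = 0 := by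
  rw [mem_closedBall_iff_norm, not_le] at ht
  exact cutoffKernel_eq_zero_of_le_norm hδ ht.le

lemma dbar_convolution {g : ℂ → ℂ} (hf : LocallyIntegrable f) (hg : ContDiff ℝ 1 g)
    (hc : HasCompactSupport g) (z : ℂ) :
    dbar (f ⋆[ContinuousLinearMap.mul ℝ ℂ, volume] g) z = ∫ t, f t * dbar g (z - t) := by
  have hcont : Continuous (fderiv ℝ g) := hg.continuous_fderiv one_ne_zero
  have hint (v : ℂ) : Integrable fun t ↦ f t * fderiv ℝ g (z - t) v :=
    (hc.fderiv_apply ℝ v).convolutionExists_right (ContinuousLinearMap.mul ℝ ℂ) hf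
      (by fun_prop) z
  rw [dbar, (hc.hasFDerivAt_convolution_right _ hf hg z).fderiv,
    convolution_precompR_apply _ hf (hc.fderiv ℝ) hcont,
    convolution_precompR_apply _ hf (hc.fderiv ℝ) hcont, convolution_def, convolution_def]
  simp only [ContinuousLinearMap.mul_apply', dbar, mul_add, mul_left_comm _ Complex.I]
  rw [integral_add (hint 1) ((hint Complex.I).const_mul _), integral_const_mul]

/-- The smoothing of `f` at scale `δ` by `cutoffKernel`, an approximate identity of mass
`2 * π`. -/
noncomputable def mollify (δ : ℝ) (f : ℂ → ℂ) : ℂ → ℂ :=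
  f ⋆[ContinuousLinearMap.mul ℝ ℂ, volume] fun x ↦ (cutoffKernel δ x : ℂ)

lemma mollify_apply (δ : ℝ) (f : ℂ → ℂ) (z : ℂ) :
    mollify δ f z = ∫ t, f t * cutoffKernel δ (t - z) := by
  rw [mollify, convolution_def]
  refine integral_congr_ae (.of_forall fun t ↦ ?_)
  beta_reduce
  rw [ContinuousLinearMap.mul_apply', ← cutoffKernel_neg, neg_sub]

lemma ae_tendsto_mollify (hf : LocallyIntegrable f) :
    ∀ᵐ x, Tendsto (fun δ ↦ mollify δ f x) (𝓝[>] 0) (𝓝 (2 * Real.pi * f x)) := by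
  obtain ⟨C, hC, hle⟩ := exists_cutoffKernel_le_div_sq ℂ
  filter_upwards [IsUnifLocDoublingMeasure.ae_tendsto_average_norm_sub volume hf 1] with x hx
  have hscale : Tendsto (fun δ : ℝ ↦ 2 * δ) (𝓝[>] 0) (𝓝[>] 0) :=
    tendsto_nhdsWithin_iff.2 ⟨tendsto_nhdsWithin_of_tendsto_nhds <|
      Continuous.tendsto' (by fun_prop) _ _ (mul_zero 2),
      eventually_mem_nhdsWithin.mono fun δ hδ ↦ mul_pos (two_pos (α := ℝ)) hδ⟩
  have haverage := hx (fun _ ↦ x) (fun δ ↦ 2 * δ) hscale <| by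
    filter_upwards [self_mem_nhdsWithin] with δ hδ
    exact mem_closedBall_self (by rw [mem_Ioi] at hδ; positivity)
  have hlim := (tendsto_integral_smul_of_tendsto_average_norm_sub
    (g := fun δ t ↦ (2 * Real.pi)⁻¹ * cutoffKernel δ (t - x)) (2 * C) haverage
    (.of_forall fun δ ↦ hf.integrableOn_isCompact (isCompact_closedBall _ _))
    ?mass ?support ?bound).const_mul (2 * Real.pi : ℂ)
  case mass =>
    refine tendsto_const_nhds.congr' ?_
    filter_upwards [self_mem_nhdsWithin] with δ hδ
    rw [integral_const_mul, integral_sub_right_eq_self (cutoffKernel δ), integral_cutoffKernel hδ,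
      inv_mul_cancel₀ (by positivity)]
  case support =>
    filter_upwards [self_mem_nhdsWithin] with δ hδ
    refine fun t ht ↦ by_contra fun hball ↦ ht ?_
    simp only [cutoffKernel_sub_eq_zero hδ hball, mul_zero]
  case bound =>
    filter_upwards [self_mem_nhdsWithin] with δ hδ t
    rw [abs_of_nonneg (mul_nonneg (by positivity) (cutoffKernel_nonneg δ _)), Measure.real,
      Complex.volume_closedBall]
    rw [mem_Ioi] at hδ
    have := hle δ (t - x)
    calc (2 * Real.pi)⁻¹ * cutoffKernel δ (t - x) ≤ (2 * Real.pi)⁻¹ * (C / δ ^ 2) := by gcongr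
      _ = 2 * C / (ENNReal.ofReal (2 * δ) ^ 2 * NNReal.pi : ℝ≥0∞).toReal := by
        simp [hδ.le]
        field_simp
  refine hlim.congr fun δ ↦ ?_
  rw [mollify_apply, ← integral_const_mul]
  refine integral_congr_ae (.of_forall fun t ↦ ?_)
  simp only [Complex.real_smul]
  push_cast
  field_simp

namespace IsWeaklyHolomorphicOn

lemma mollify_eq_mollify (hw : IsWeaklyHolomorphicOn f Ω) (hf : LocallyIntegrable f)
    (hδ : 0 < δ) (hδ' : 0 < δ') (hball : closedBall z (2 * δ) ⊆ Ω)
    (hball' : closedBall z (2 * δ') ⊆ Ω) : mollify δ f z = mollify δ' f z := by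
  obtain ⟨φ, hφ⟩ := exists_testFunction_coe_eq (Ω := Ω) (φ := fun t ↦ cauchyCutoffSub δ δ' (t - z))
    ((contDiff_cauchyCutoffSub hδ hδ').comp (contDiff_id.sub contDiff_const))
    ((isCompact_closedBall z (2 * δ)).union (isCompact_closedBall z (2 * δ')))
    (union_subset hball hball') fun t ht ↦ by
      rw [mem_union, not_or, mem_closedBall_iff_norm, mem_closedBall_iff_norm] at ht
      exact cauchyCutoffSub_eq_zero hδ hδ' (not_le.1 ht.1).le (not_le.1 ht.2).le
  have hint {ε : ℝ} (hε : 0 < ε) : Integrable fun t ↦ f t * cutoffKernel ε (t - z) := by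
    have hc : HasCompactSupport fun t ↦ (cutoffKernel ε (t - z) : ℂ) :=
      .intro (isCompact_closedBall z (2 * ε)) fun t ht ↦ by
        rw [cutoffKernel_sub_eq_zero hε ht, Complex.ofReal_zero]
    have hcont := (contDiff_cutoffKernel ε (E := ℂ)).continuous
    simpa only [smul_eq_mul] using hf.integrable_smul_right_of_hasCompactSupport (by fun_prop) hc
  have hzero := hw φ
  simp only [hφ, dbar_comp_sub_const, dbar_cauchyCutoffSub hδ hδ', mul_sub] at hzero
  rw [integral_sub (hint hδ) (hint hδ')] at hzero
  rw [mollify_apply, mollify_apply, sub_eq_zero.1 hzero]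

lemma differentiableAt_mollify (hw : IsWeaklyHolomorphicOn f Ω) (hf : LocallyIntegrable f)
    (hδ : 0 < δ) (hball : closedBall z (2 * δ) ⊆ Ω) :
    DifferentiableAt ℂ (mollify δ f) z := by
  have hχ : ContDiff ℝ ∞ fun x : ℂ ↦ (cutoffKernel δ x : ℂ) :=
    contDiff_ofReal_comp (contDiff_cutoffKernel δ)
  have hχ1 := hχ.of_le (m := 1) (by simp)
  have hc := hasCompactSupport_ofReal_cutoffKernel hδ
  obtain ⟨φ, hφ⟩ := exists_testFunction_coe_eq (Ω := Ω) (φ := fun t ↦ (cutoffKernel δ (z - t) : ℂ))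
    (hχ.comp (contDiff_const.sub contDiff_id)) (isCompact_closedBall z (2 * δ)) hball
    fun t ht ↦ by rw [← neg_sub, cutoffKernel_neg, cutoffKernel_sub_eq_zero hδ ht,
      Complex.ofReal_zero]
  refine differentiableAt_complex_iff_dbar_eq_zero.2
    ⟨(hc.hasFDerivAt_convolution_right _ hf hχ1 z).differentiableAt, ?_⟩
  have hzero := hw φ
  simp only [hφ, dbar_comp_const_sub (hχ.differentiable (by simp)), mul_neg, integral_neg] at hzero
  rw [mollify, dbar_convolution hf hχ1 hc, neg_eq_zero.1 hzero]

lemma ae_eq_mollify_of_ball_subset (hw : IsWeaklyHolomorphicOn f Ω) (hf : LocallyIntegrable f) :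
    ∀ᵐ x, ∀ δ, 0 < δ → closedBall x (2 * δ) ⊆ Ω → mollify δ f x = 2 * Real.pi * f x := by
  filter_upwards [ae_tendsto_mollify hf] with x hx δ hδ hball
  refine tendsto_nhds_unique (tendsto_const_nhds.congr' ?_) hx
  filter_upwards [Ioc_mem_nhdsGT hδ] with ε hε
  exact hw.mollify_eq_mollify hf hδ hε.1 hball <|
    (closedBall_subset_closedBall (by linarith [hε.2])).trans hball

/-- Weyl's lemma, together with the mean value property of the holomorphic representative. -/
theorem exists_differentiableOn_ae_eq (hw : IsWeaklyHolomorphicOn f Ω) (hf : LocallyIntegrable f) :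
    ∃ F : ℂ → ℂ, DifferentiableOn ℂ F Ω ∧ (∀ᵐ x, x ∈ Ω → F x = f x) ∧
      ∀ z δ, 0 < δ → closedBall z (2 * δ) ⊆ Ω → mollify δ f z = 2 * Real.pi * F z := by
  have hex : ∀ z ∈ Ω, ∃ δ, 0 < δ ∧ ∀ x ∈ ball z δ, closedBall x (2 * δ) ⊆ Ω := fun z hz ↦ by
    obtain ⟨ε, hε, hball⟩ := Metric.isOpen_iff.1 Ω.isOpen z hz
    refine ⟨ε / 4, by positivity, fun x hx ↦ (closedBall_subset_ball' ?_).trans hball⟩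
    linarith [mem_ball.1 hx]
  choose! ρ hρ hball using hex
  have hπ : (2 * Real.pi : ℂ) ≠ 0 := by simp [Real.pi_ne_zero]
  have hmean : ∀ z δ, 0 < δ → closedBall z (2 * δ) ⊆ Ω →
      mollify δ f z = 2 * Real.pi * ((2 * Real.pi : ℂ)⁻¹ * mollify (ρ z) f z) := fun z δ hδ hz ↦ by
    have hzΩ : z ∈ Ω := hz (mem_closedBall_self (by positivity))
    rw [mul_inv_cancel_left₀ hπ]
    exact hw.mollify_eq_mollify hf hδ (hρ z hzΩ) hz (hball z hzΩ z (mem_ball_self (hρ z hzΩ)))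
  refine ⟨fun z ↦ (2 * Real.pi : ℂ)⁻¹ * mollify (ρ z) f z, fun z hz ↦ ?_, ?_, hmean⟩
  · have hdiff := hw.differentiableAt_mollify hf (hρ z hz) (hball z hz z (mem_ball_self (hρ z hz)))
    refine ((hdiff.const_mul (2 * Real.pi : ℂ)⁻¹).congr_of_eventuallyEq ?_).differentiableWithinAt
    filter_upwards [ball_mem_nhds z (hρ z hz)] with x hx
    rw [hmean x _ (hρ z hz) (hball z hz x hx), inv_mul_cancel_left₀ hπ]
  · filter_upwards [hw.ae_eq_mollify_of_ball_subset hf] with x hx hxΩ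
    rw [hx _ (hρ x hxΩ) (hball x hxΩ x (mem_ball_self (hρ x hxΩ))), inv_mul_cancel_left₀ hπ]

end IsWeaklyHolomorphicOn

end Weyl

section Duality

open scoped ComplexConjugate Distributions

lemma lintegral_nnnorm_sq_eq_norm_sq {α E : Type*} [MeasurableSpace α] {μ : Measure α}
    [NormedAddCommGroup E] (f : Lp E 2 μ) :
    ∫⁻ t, (‖f t‖₊ : ℝ≥0∞) ^ 2 ∂μ = ENNReal.ofReal (‖f‖ ^ 2) := by
  have hpow := eLpNorm_nnreal_pow_eq_lintegral (f := f) (μ := μ) (two_ne_zero (α := ℝ≥0))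
  simp only [NNReal.coe_ofNat, ENNReal.coe_ofNat, ENNReal.rpow_ofNat, enorm_eq_nnnorm] at hpow
  rw [Lp.norm_def, ← ENNReal.toReal_pow, ENNReal.ofReal_toReal (by finiteness), hpow]

lemma integral_norm_sq_eq_norm_sq {α E : Type*} [MeasurableSpace α] {μ : Measure α}
    [NormedAddCommGroup E] (f : Lp E 2 μ) : ∫ t, ‖f t‖ ^ 2 ∂μ = ‖f‖ ^ 2 := by
  rw [integral_eq_lintegral_of_nonneg_ae (.of_forall fun t ↦ by positivity)
    (by fun_prop)]
  simp_rw [ENNReal.ofReal_pow (norm_nonneg _), ofReal_norm, enorm_eq_nnnorm]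
  rw [lintegral_nnnorm_sq_eq_norm_sq, ENNReal.toReal_ofReal (by positivity)]

lemma exists_mem_orthogonal_norm_sub_sq_lt {H : Type*} [NormedAddCommGroup H]
    [InnerProductSpace ℂ H] [CompleteSpace H] (V : Submodule ℂ H) (x : H) :
    ∃ y ∈ Vᗮ, ⟪y, x⟫_ℂ = (‖y‖ ^ 2 : ℝ) ∧ ∀ ε > 0, ∃ v ∈ V, ‖x - v‖ ^ 2 < ‖y‖ ^ 2 + ε := by
  have : CompleteSpace V.topologicalClosure := V.isClosed_topologicalClosure.completeSpace_coe
  set p := V.topologicalClosure.starProjection x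
  have horth : x - p ∈ V.topologicalClosureᗮ := Submodule.sub_starProjection_mem_orthogonal x
  have hpmem : p ∈ V.topologicalClosure := Submodule.starProjection_apply_mem _ x
  refine ⟨x - p, V.orthogonal_closure ▸ horth, ?_, fun ε hε ↦ ?_⟩
  · nth_rw 2 [← sub_add_cancel x p]
    rw [inner_add_right, Submodule.inner_left_of_mem_orthogonal hpmem horth, add_zero,
      inner_self_eq_norm_sq_to_K]
    norm_cast
  · have hopen : IsOpen {v : H | ‖x - v‖ ^ 2 < ‖x - p‖ ^ 2 + ε} :=
      isOpen_lt (by fun_prop) continuous_const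
    obtain ⟨v, hv, hvV⟩ := mem_closure_iff.1 hpmem _ hopen (lt_add_of_pos_right _ hε)
    exact ⟨v, hvV, hv⟩

lemma norm_sq_le_of_bergmanKernel_le {E : Type*} [NormedAddCommGroup E] [NormedSpace ℂ E]
    [MeasureSpace E] {Ω : Set E} {z : E} {F : E → ℂ} {M : ℝ≥0} {A : ℝ}
    (hK : bergmanKernel Ω z ≤ M) (hF : DifferentiableOn ℂ F Ω) (hz : z ∈ Ω) (hA : 0 ≤ A)
    (hFA : ∫⁻ w in Ω, (‖F w‖₊ : ℝ≥0∞) ^ 2 ≤ ENNReal.ofReal A) : ‖F z‖ ^ 2 ≤ M * A := by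
  obtain h0 | h0 := eq_or_ne (F z) 0
  · rw [h0, norm_zero, zero_pow two_ne_zero]
    positivity
  have hfin : ∫⁻ w in Ω, (‖F w‖₊ : ℝ≥0∞) ^ 2 < ⊤ := hFA.trans_lt ENNReal.ofReal_lt_top
  have hsup : (‖F z‖₊ : ℝ≥0∞) ^ 2 / ∫⁻ w in Ω, (‖F w‖₊ : ℝ≥0∞) ^ 2 ≤ bergmanKernel Ω z :=
    le_iSup₂_of_le F ⟨hF, hfin⟩ (le_iSup_of_le ⟨z, hz, h0⟩ le_rfl)
  have hle := hsup.trans hK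
  rw [ENNReal.div_le_iff_le_mul (.inr ENNReal.coe_ne_top) (.inl hfin.ne)] at hle
  have hreal := ENNReal.toReal_mono (by finiteness) (hle.trans (mul_le_mul_right hFA _))
  simpa [hA] using hreal

variable {Ω : TopologicalSpace.Opens ℂ}

lemma memLp_dbar (φ : 𝓓(Ω, ℂ)) : MemLp (dbar φ) 2 :=
  (continuous_dbar (φ.contDiff.of_le (by simp))).memLp_of_hasCompactSupport
    (hasCompactSupport_dbar φ.hasCompactSupport)

/-- The operator `∂̄` from test functions on `Ω` to `L²(ℂ)`; the orthogonal complement of its range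
consists of the `f` whose conjugate is weakly holomorphic on `Ω`. -/
noncomputable def dbarLp (Ω : TopologicalSpace.Opens ℂ) :
    𝓓(Ω, ℂ) →ₗ[ℂ] Lp ℂ 2 (volume : Measure ℂ) where
  toFun φ := (memLp_dbar φ).toLp
  map_add' φ ψ := by
    rw [← MemLp.toLp_add]
    refine MemLp.toLp_congr _ _ (.of_forall fun z ↦ ?_)
    exact dbar_add (φ.contDiff.differentiable (by simp) z) (ψ.contDiff.differentiable (by simp) z)
  map_smul' c φ := by
    rw [RingHom.id_apply, ← MemLp.toLp_const_smul]
    refine MemLp.toLp_congr _ _ (.of_forall fun z ↦ ?_)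
    exact dbar_const_smul c (φ.contDiff.differentiable (by simp) z)

lemma inner_toLp_eq_integral {g : ℂ → ℂ} (f : Lp ℂ 2 (volume : Measure ℂ)) (hg : MemLp g 2) :
    ⟪f, hg.toLp⟫_ℂ = ∫ t, conj (f t) * g t := by
  rw [L2.inner_def]
  refine integral_congr_ae (hg.coeFn_toLp.mono fun t ht ↦ ?_)
  simp only [ht, RCLike.inner_apply']

lemma isWeaklyHolomorphicOn_conj_of_mem_orthogonal {f : Lp ℂ 2 (volume : Measure ℂ)}
    (hf : f ∈ (LinearMap.range (dbarLp Ω))ᗮ) : IsWeaklyHolomorphicOn (fun t ↦ conj (f t)) Ω :=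
  fun φ ↦ by
    rw [← inner_toLp_eq_integral f (memLp_dbar φ)]
    exact Submodule.inner_left_of_mem_orthogonal (LinearMap.mem_range_self (dbarLp Ω) φ) hf

variable {z : ℂ} {δ : ℝ} {M : ℝ≥0}

lemma norm_inner_sq_le_of_mem_orthogonal (hK : bergmanKernel (Ω : Set ℂ) z ≤ M) (hδ : 0 < δ)
    (hball : closedBall z (2 * δ) ⊆ Ω) {f : Lp ℂ 2 (volume : Measure ℂ)}
    (hf : f ∈ (LinearMap.range (dbarLp Ω))ᗮ) :
    ‖∫ t, conj (f t) * cutoffKernel δ (t - z)‖ ^ 2 ≤ (2 * Real.pi) ^ 2 * (M * ‖f‖ ^ 2) := by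
  have hloc : LocallyIntegrable fun t ↦ conj (f t) :=
    (Lp.memLp f).star.locallyIntegrable one_le_two
  obtain ⟨F, hF, hFf, hmean⟩ :=
    (isWeaklyHolomorphicOn_conj_of_mem_orthogonal hf).exists_differentiableOn_ae_eq hloc
  have hFnorm : ∫⁻ t in Ω, (‖F t‖₊ : ℝ≥0∞) ^ 2 ≤ ENNReal.ofReal (‖f‖ ^ 2) := by
    rw [← lintegral_nnnorm_sq_eq_norm_sq]
    refine (setLIntegral_congr_fun_ae Ω.isOpen.measurableSet (g := fun t ↦ (‖f t‖₊ : ℝ≥0∞) ^ 2)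
      ?_).le.trans (setLIntegral_le_lintegral _ _)
    filter_upwards [hFf] with t ht htΩ
    rw [ht htΩ, RCLike.nnnorm_conj]
  have hz : z ∈ Ω := hball (mem_closedBall_self (by positivity))
  have hFz := norm_sq_le_of_bergmanKernel_le hK hF hz (by positivity) hFnorm
  rw [← mollify_apply, hmean z δ hδ hball, norm_mul, mul_pow]
  simpa [abs_of_pos Real.pi_pos] using mul_le_mul_of_nonneg_left hFz (sq_nonneg (2 * Real.pi))

/-- Hahn-Banach duality: the distance in `L²` from an approximate delta at `z` to the range of `∂̄`
on test functions is attained by pairing with a holomorphic function, hence is controlled by the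
Bergman kernel. -/
theorem exists_integral_norm_cutoffKernel_sub_dbar_sq_le (hK : bergmanKernel (Ω : Set ℂ) z ≤ M)
    (hδ : 0 < δ) (hball : closedBall z (2 * δ) ⊆ Ω) :
    ∃ φ : 𝓓(Ω, ℂ),
      ∫ t, ‖(cutoffKernel δ (t - z) : ℂ) - dbar φ t‖ ^ 2 ≤ (2 * Real.pi) ^ 2 * M + 1 := by
  have hc : HasCompactSupport fun t ↦ (cutoffKernel δ (t - z) : ℂ) :=
    .intro (isCompact_closedBall z (2 * δ)) fun t ht ↦ by
      rw [cutoffKernel_sub_eq_zero hδ ht, Complex.ofReal_zero]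
  have hχcont := (contDiff_cutoffKernel δ (E := ℂ)).continuous
  have hχ : MemLp (fun t : ℂ ↦ (cutoffKernel δ (t - z) : ℂ)) 2 :=
    Continuous.memLp_of_hasCompactSupport (by fun_prop) hc
  obtain ⟨f, hf, hinner, happrox⟩ :=
    exists_mem_orthogonal_norm_sub_sq_lt (LinearMap.range (dbarLp Ω)) hχ.toLp
  have hfle : ‖f‖ ^ 2 ≤ (2 * Real.pi) ^ 2 * M := by
    have hle := norm_inner_sq_le_of_mem_orthogonal hK hδ hball hf
    rw [← inner_toLp_eq_integral f hχ, hinner, Complex.norm_real,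
      Real.norm_of_nonneg (by positivity)] at hle
    by_contra! hlt
    nlinarith [(show 0 ≤ (2 * Real.pi) ^ 2 * (M : ℝ) by positivity).trans_lt hlt]
  obtain ⟨_, ⟨φ, rfl⟩, hφ⟩ := happrox 1 one_pos
  refine ⟨φ, le_trans (le_of_eq ?_) (hφ.le.trans (by gcongr))⟩
  rw [← integral_norm_sq_eq_norm_sq]
  refine integral_congr_ae ?_
  filter_upwards [Lp.coeFn_sub hχ.toLp (dbarLp Ω φ), hχ.coeFn_toLp, (memLp_dbar φ).coeFn_toLp]
    with t hsub hχt hφt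
  rw [hsub, Pi.sub_apply, hχt]
  exact congrArg (fun x ↦ ‖_ - x‖ ^ 2) hφt.symm

end Duality

section CauchyPotential

open scoped Distributions

variable {z : ℂ} {R δ : ℝ}

/-- The energy density of `h`, in which the term of order zero is weighted by the regularized
inverse distance to `z`. -/
noncomputable def energyDensity (z : ℂ) (s : ℝ) (h : ℂ → ℂ) (t : ℂ) : ℝ :=
  ‖h t‖ ^ 2 * regInvDist z s t + ‖fderiv ℝ h t‖ ^ 2

lemma energyDensity_nonneg (z : ℂ) (s : ℝ) (h : ℂ → ℂ) (t : ℂ) : 0 ≤ energyDensity z s h t :=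
  add_nonneg (mul_nonneg (sq_nonneg _) (regInvDist.nonneg z s t)) (sq_nonneg _)

lemma integrable_energyDensity {h : ℂ → ℂ} {s : ℝ} (hs : s ≠ 0) (z : ℂ)
    (hh : ContDiff ℝ 1 h) (hc : HasCompactSupport h) :
    Integrable (energyDensity z s h) := by
  have hW := regInvDist.continuous hs z
  have := hh.continuous_fderiv one_ne_zero
  have hch := hh.continuous
  refine Continuous.integrable_of_hasCompactSupport ?_ <| .intro hc fun x hx ↦ ?_
  · unfold energyDensity
    fun_prop
  · simp [energyDensity, fderiv_of_notMem_tsupport (𝕜 := ℝ) hx, image_eq_zero_of_notMem_tsupport hx]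

lemma setIntegral_energyDensity_le {h : ℂ → ℂ} {s : ℝ} (hs : s ≠ 0) (z : ℂ) (hh : ContDiff ℝ 1 h)
    (hc : HasCompactSupport h) (A : Set ℂ) :
    ∫ t in A, energyDensity z s h t ≤ ∫ t, energyDensity z s h t :=
  setIntegral_le_integral (integrable_energyDensity hs z hh hc)
    (.of_forall (energyDensity_nonneg z s h))

lemma integral_energyDensity_le_of_support_subset {h : ℂ → ℂ} {s : ℝ} (hs : s ≠ 0)
    (hh : ContDiff ℝ 1 h) (hc : HasCompactSupport h)
    (hsupp : Function.support h ⊆ closedBall z R) :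
    ∫ t, energyDensity z s h t ≤
      (2 + R ^ 2) * ∫ t, ‖fderiv ℝ h t‖ ^ 2 := by
  have hW := regInvDist.continuous hs z
  have := hh.continuous_fderiv one_ne_zero
  have hch := hh.continuous
  have hint {f : ℂ → ℝ} (hf : Continuous f) (h0 : ∀ t, h t = 0 → fderiv ℝ h t = 0 → f t = 0) :
      Integrable f := hf.integrable_of_hasCompactSupport <| .intro hc fun t ht ↦
    h0 t (image_eq_zero_of_notMem_tsupport ht) (fderiv_of_notMem_tsupport (𝕜 := ℝ) ht)
  have hint₀ : Integrable fun t ↦ ‖h t‖ ^ 2 := hint (by fun_prop) (by simp +contextual)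
  have hint₁ : Integrable fun t ↦ ‖fderiv ℝ h t‖ ^ 2 := hint (by fun_prop) (by simp +contextual)
  have hint₂ : Integrable fun t ↦ ‖h t‖ ^ 2 * regInvDist z s t :=
    hint (by fun_prop) (by simp +contextual)
  have hpoincare := integral_norm_sq_le_integral_norm_fderiv_sq (μ := volume) hh hc hsupp
  have hhardy := finrank_sub_one_mul_integral_norm_sq_mul_regInvDist_le (μ := volume) hs z hh hc
  rw [Complex.finrank_real_complex, Nat.cast_ofNat, mul_div_cancel_left₀ _ two_ne_zero]
    at hpoincare
  rw [Complex.finrank_real_complex, ← integral_const_mul] at hhardy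
  have hamgm : ∫ t, 2 * (‖h t‖ * ‖fderiv ℝ h t‖) ≤ ∫ t, (‖h t‖ ^ 2 + ‖fderiv ℝ h t‖ ^ 2) := by
    refine integral_mono_of_nonneg (.of_forall fun t ↦ by positivity) (hint₀.add hint₁)
      (.of_forall fun t ↦ ?_)
    linarith [two_mul_le_add_sq ‖h t‖ ‖fderiv ℝ h t‖]
  rw [integral_add hint₀ hint₁, integral_const_mul] at hamgm
  simp_rw [energyDensity]
  rw [integral_add hint₂ hint₁]
  norm_num at hhardy
  linarith

variable {Ω : TopologicalSpace.Opens ℂ}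

lemma integral_norm_dbar_cauchyCutoffSub_sub_sq_le (hδ : 0 < δ) (hR : 0 < R) (φ : 𝓓(Ω, ℂ)) :
    ∫ t, ‖dbar (fun t ↦ cauchyCutoffSub δ R (t - z) - φ t) t‖ ^ 2 ≤
      2 * (∫ t, ‖(cutoffKernel δ (t - z) : ℂ) - dbar φ t‖ ^ 2) +
        2 * ∫ x : ℂ, cutoffKernel R x ^ 2 := by
  have hdbar (t : ℂ) : dbar (fun t ↦ cauchyCutoffSub δ R (t - z) - φ t) t
      = (cutoffKernel δ (t - z) - dbar φ t) - cutoffKernel R (t - z) := by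
    have hu := (contDiff_cauchyCutoffSub hδ hR).comp (contDiff_id.sub (contDiff_const (c := z)))
    have hsub := dbar_sub (hu.differentiable (by simp) t) (φ.contDiff.differentiable (by simp) t)
    have hcomp := dbar_comp_sub_const (cauchyCutoffSub δ R) z t
    rw [dbar_cauchyCutoffSub hδ hR] at hcomp
    exact hsub.trans (by rw [← sub_right_comm, ← hcomp]; rfl)
  have hφ := continuous_dbar (φ.contDiff.of_le (m := 1) (by simp))
  have hφc := hasCompactSupport_dbar φ.hasCompactSupport
  have hχ (ε : ℝ) := (contDiff_cutoffKernel ε (E := ℂ)).continuous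
  have hint1 : Integrable fun t ↦ ‖(cutoffKernel δ (t - z) : ℂ) - dbar φ t‖ ^ 2 := by
    refine Continuous.integrable_of_hasCompactSupport (by fun_prop) <|
      .intro ((isCompact_closedBall z (2 * δ)).union hφc) fun t ht ↦ ?_
    rw [mem_union, not_or] at ht
    simp [cutoffKernel_sub_eq_zero hδ ht.1, image_eq_zero_of_notMem_tsupport ht.2]
  have hint2 : Integrable fun t ↦ cutoffKernel R (t - z) ^ 2 := by
    refine Continuous.integrable_of_hasCompactSupport (by fun_prop) <|
      .intro (isCompact_closedBall z (2 * R)) fun t ht ↦ ?_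
    simp [cutoffKernel_sub_eq_zero hR ht]
  rw [← integral_sub_right_eq_self (fun x : ℂ ↦ cutoffKernel R x ^ 2) z, ← integral_const_mul,
    ← integral_const_mul, ← integral_add (hint1.const_mul 2) (hint2.const_mul 2)]
  refine integral_mono_of_nonneg (.of_forall fun t ↦ by positivity)
    ((hint1.const_mul 2).add (hint2.const_mul 2)) (.of_forall fun t ↦ ?_)
  have hχR : ‖(cutoffKernel R (t - z) : ℂ)‖ = cutoffKernel R (t - z) := by
    rw [Complex.norm_real, Real.norm_of_nonneg (cutoffKernel_nonneg R _)]
  have hnorm := norm_sub_le ((cutoffKernel δ (t - z) : ℂ) - dbar φ t) (cutoffKernel R (t - z))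
  rw [hχR] at hnorm
  simp only [hdbar]
  exact (pow_le_pow_left₀ (norm_nonneg _) hnorm 2).trans (add_sq_le.trans_eq (mul_add _ _ _))

lemma exists_testFunction_eq_one_sub (hδ : 0 < δ) (hR : 0 < R) (hball : closedBall z (2 * δ) ⊆ Ω)
    (φ : 𝓓(Ω, ℂ)) :
    ∃ ψ : 𝓓(Ω, ℂ), ∀ t ∈ ball z R,
      ψ t = 1 - (t - z) * (cauchyCutoffSub δ R (t - z) - φ t) := by
  obtain ⟨ψ, hψ⟩ := exists_testFunction_coe_eq (Ω := Ω)
    (φ := fun t ↦ (cutoff δ (t - z) : ℂ) + (t - z) * φ t)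
    ((contDiff_ofReal_comp ((contDiff_cutoff δ).comp (contDiff_id.sub contDiff_const))).add
      ((contDiff_id.sub contDiff_const).mul φ.contDiff))
    ((isCompact_closedBall z (2 * δ)).union φ.hasCompactSupport)
    (union_subset hball φ.tsupport_subset) fun t ht ↦ by
      rw [mem_union, not_or, mem_closedBall_iff_norm, not_le] at ht
      simp [cutoff_eq_zero hδ ht.1.le, image_eq_zero_of_notMem_tsupport ht.2]
  refine ⟨ψ, fun t ht ↦ ?_⟩
  rw [mem_ball_iff_norm] at ht
  rw [hψ, cauchyCutoffSub, cutoff_eq_one hR ht.le]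
  obtain rfl | hne := eq_or_ne t z
  · simp [cutoff_eq_one hδ, hδ.le]
  · have := sub_ne_zero.2 hne
    field_simp
    push_cast
    ring

/-- Where `Ω` ends, `h` is the Cauchy kernel `1 / (t - z)`: it is the kernel truncated at a small
scale, corrected by a test function whose `∂̄` cancels the truncation error up to a bounded term. -/
theorem exists_sobolev_bound_of_bergmanKernel_le (hR : 0 < R) (M : ℝ≥0) :
    ∃ N, ∀ (Ω : TopologicalSpace.Opens ℂ), ∀ z ∈ Ω, (Ω : Set ℂ) ⊆ ball z R →
      bergmanKernel (Ω : Set ℂ) z ≤ M →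
      ∃ h : ℂ → ℂ, ContDiff ℝ ∞ h ∧ HasCompactSupport h ∧
        (∃ ψ : 𝓓(Ω, ℂ), ∀ t ∈ ball z R, ψ t = 1 - (t - z) * h t) ∧
        ∀ s ≠ 0, ∫ t, energyDensity z s h t ≤ N := by
  set A := 2 * ((2 * Real.pi) ^ 2 * M + 1) + 2 * ∫ x : ℂ, cutoffKernel R x ^ 2
  refine ⟨(2 + (2 * R) ^ 2) * A, fun Ω z hz hΩ hK ↦ ?_⟩
  obtain ⟨δ, hδ, hδR, hball⟩ : ∃ δ, 0 < δ ∧ δ ≤ R ∧ closedBall z (2 * δ) ⊆ Ω := by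
    obtain ⟨ε, hε, hball⟩ := Metric.isOpen_iff.1 Ω.isOpen z hz
    refine ⟨min (ε / 4) R, by positivity, min_le_right _ _, (closedBall_subset_ball ?_).trans hball⟩
    linarith [min_le_left (ε / 4) R]
  obtain ⟨φ, hφ⟩ := exists_integral_norm_cutoffKernel_sub_dbar_sq_le hK hδ hball
  set h : ℂ → ℂ := fun t ↦ cauchyCutoffSub δ R (t - z) - φ t with hdef
  have hsmooth : ContDiff ℝ ∞ h :=
    ((contDiff_cauchyCutoffSub hδ hR).comp (contDiff_id.sub contDiff_const)).sub φ.contDiff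
  have hzero : ∀ t ∉ closedBall z (2 * R), h t = 0 := fun t ht ↦ by
    have hφt : φ t = 0 := image_eq_zero_of_notMem_tsupport fun hmem ↦
      ht (ball_subset_closedBall.trans (closedBall_subset_closedBall (by linarith))
        (hΩ (φ.tsupport_subset hmem)))
    rw [mem_closedBall_iff_norm, not_le] at ht
    simp only [hdef, hφt, cauchyCutoffSub_eq_zero hδ hR (by linarith) ht.le, sub_zero]
  have hc : HasCompactSupport h := .intro (isCompact_closedBall z (2 * R)) hzero
  have hA : ∫ t, ‖fderiv ℝ h t‖ ^ 2 ≤ A := by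
    refine (integral_norm_fderiv_sq_le_integral_norm_dbar_sq
      (contDiff_infty.1 hsmooth 2) hc).trans ?_
    linarith [integral_norm_dbar_cauchyCutoffSub_sub_sq_le (z := z) hδ hR φ]
  refine ⟨h, hsmooth, hc, exists_testFunction_eq_one_sub hδ hR hball φ, fun s hs ↦ ?_⟩
  exact (integral_energyDensity_le_of_support_subset hs (contDiff_infty.1 hsmooth 1) hc
    fun t ht ↦ by_contra fun hn ↦ ht (hzero t hn)).trans (by gcongr)

end CauchyPotential

section TestWeight

variable {z t : ℂ} {r s : ℝ} {h : ℂ → ℂ}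

lemma norm_fderiv_cutoff_le (hr : 0 < r) (x : ℂ) :
    ‖fderiv ℝ (cutoff r) x‖ ≤ 2 * r * cutoffKernel r x := by
  rw [← norm_gradient, gradient_cutoff, norm_smul, norm_neg,
    Real.norm_of_nonneg (cutoffKernel_nonneg r x)]
  obtain hx | hx := le_total (2 * r) ‖x‖
  · simp [cutoffKernel_eq_zero_of_le_norm hr hx]
  · rw [mul_comm]
    exact mul_le_mul_of_nonneg_right hx (cutoffKernel_nonneg r x)

/-- Hardy's inequality applied to a cutoff function. -/
lemma integral_cutoff_sq_mul_regInvDist_le (hs : s ≠ 0) (hr : 0 < r) (z : ℂ) :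
    ∫ t, cutoff r (t - z) ^ 2 * regInvDist z s t ≤ 8 * Real.pi * r := by
  have hκ : ContDiff ℝ 1 fun t ↦ cutoff r (t - z) :=
    (contDiff_infty.1 (contDiff_cutoff r) 1).comp (contDiff_id.sub contDiff_const)
  have hc : HasCompactSupport fun t ↦ cutoff r (t - z) :=
    .intro (isCompact_closedBall z (2 * r)) fun t ht ↦
      cutoff_eq_zero hr (by rw [mem_closedBall_iff_norm, not_le] at ht; exact ht.le)
  have hχ : Integrable fun t ↦ 2 * r * cutoffKernel r (t - z) := by
    have := (contDiff_cutoffKernel r (E := ℂ)).continuous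
    exact Continuous.integrable_of_hasCompactSupport (by fun_prop) <|
      .intro (isCompact_closedBall z (2 * r)) fun t ht ↦ by simp [cutoffKernel_sub_eq_zero hr ht]
  have hhardy := finrank_sub_one_mul_integral_norm_sq_mul_regInvDist_le (μ := volume) hs z hκ hc
  simp only [Complex.finrank_real_complex, Nat.cast_ofNat, Real.norm_eq_abs, sq_abs] at hhardy
  have hle : ∫ t, |cutoff r (t - z)| * ‖fderiv ℝ (fun y ↦ cutoff r (y - z)) t‖ ≤
      ∫ t, 2 * r * cutoffKernel r (t - z) := by
    refine integral_mono_of_nonneg (.of_forall fun t ↦ by positivity) hχ (.of_forall fun t ↦ ?_)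
    dsimp only
    rw [fderiv_comp_sub (f := cutoff r) z, abs_of_nonneg (cutoff_nonneg r _)]
    exact (mul_le_of_le_one_left (norm_nonneg _) (cutoff_le_one r _)).trans
      (norm_fderiv_cutoff_le hr _)
  rw [integral_const_mul, integral_sub_right_eq_self (fun x : ℂ ↦ cutoffKernel r x),
    integral_cutoffKernel hr] at hle
  linarith

lemma setIntegral_closedBall_regInvDist_le (hs : s ≠ 0) (hr : 0 < r) (z : ℂ) :
    ∫ t in closedBall z r, regInvDist z s t ≤ 8 * Real.pi * r := by
  have hW := regInvDist.continuous hs z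
  have hκ := (contDiff_cutoff r (E := ℂ)).continuous
  calc ∫ t in closedBall z r, regInvDist z s t
      = ∫ t in closedBall z r, cutoff r (t - z) ^ 2 * regInvDist z s t :=
        setIntegral_congr_fun measurableSet_closedBall fun t ht ↦ by
          simp [cutoff_eq_one hr (mem_closedBall_iff_norm.1 ht)]
    _ ≤ ∫ t, cutoff r (t - z) ^ 2 * regInvDist z s t := by
        refine setIntegral_le_integral (Continuous.integrable_of_hasCompactSupport (by fun_prop) <|
          .intro (isCompact_closedBall z (2 * r)) fun t ht ↦ ?_)
          (.of_forall fun t ↦ mul_nonneg (sq_nonneg _) (regInvDist.nonneg z s t))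
        rw [mem_closedBall_iff_norm, not_le] at ht
        simp [cutoff_eq_zero hr ht.le]
    _ ≤ 8 * Real.pi * r := integral_cutoff_sq_mul_regInvDist_le hs hr z

/-- The weight against which the barrier is tested: the real part of `1 - (t - z) h(t)`, cut off to
the ball of radius `r` around `z`. -/
noncomputable def testWeight (z : ℂ) (r : ℝ) (h : ℂ → ℂ) (t : ℂ) : ℝ :=
  cutoff (r / 2) (t - z) * (1 - (t - z) * h t).re

lemma testWeight_eq_zero (hr : 0 < r) (ht : t ∉ closedBall z r) : testWeight z r h t = 0 := by
  rw [mem_closedBall_iff_norm, not_le] at ht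
  rw [testWeight, cutoff_eq_zero (half_pos hr) (by linarith), zero_mul]

lemma tsupport_testWeight_subset (hr : 0 < r) : tsupport (testWeight z r h) ⊆ closedBall z r :=
  closure_minimal (fun _ ht ↦ by_contra fun hn ↦ ht (testWeight_eq_zero hr hn)) isClosed_closedBall

lemma contDiff_testWeight {n : ℕ∞} (hh : ContDiff ℝ n h) : ContDiff ℝ n (testWeight z r h) :=
  (((contDiff_cutoff (r / 2)).of_le (mod_cast le_top)).comp (contDiff_id.sub contDiff_const)).mul
    (Complex.reCLM.contDiff.comp (contDiff_const.sub ((contDiff_id.sub contDiff_const).mul hh)))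

lemma norm_one_sub_mul_le : ‖1 - (t - z) * h t‖ ≤ 1 + ‖t - z‖ * ‖h t‖ := by
  simpa using norm_sub_le 1 ((t - z) * h t)

lemma abs_testWeight_le : |testWeight z r h t| ≤ 1 + ‖t - z‖ * ‖h t‖ := by
  rw [testWeight, abs_mul, abs_of_nonneg (cutoff_nonneg _ _)]
  exact (mul_le_of_le_one_left (abs_nonneg _) (cutoff_le_one _ _)).trans
    ((Complex.abs_re_le_norm _).trans norm_one_sub_mul_le)

lemma half_sub_le_testWeight_sq (hr : 0 < r) (hsr : 2 * s ≤ r) (ht : ‖t - z‖ ≤ s) :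
    1 / 2 - s ^ 2 * ‖h t‖ ^ 2 ≤ testWeight z r h t ^ 2 := by
  rw [testWeight, cutoff_eq_one (half_pos hr) (by linarith), one_mul, Complex.sub_re,
    Complex.one_re]
  have hre : ((t - z) * h t).re ^ 2 ≤ (s * ‖h t‖) ^ 2 := by
    refine sq_le_sq' ?_ ?_ <;>
      linarith [abs_le.1 (Complex.abs_re_le_norm ((t - z) * h t)), norm_mul (t - z) (h t),
        mul_le_mul_of_nonneg_right ht (norm_nonneg (h t))]
  linarith [sq_nonneg (2 * ((t - z) * h t).re - 1)]

lemma exists_norm_gradient_cutoff_le :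
    ∃ C, 0 < C ∧ ∀ r > 0, ∀ z t : ℂ, ‖∇ (cutoff (r / 2)) (t - z)‖ ≤
      C * (closedBall z r \ ball z (r / 2)).indicator (fun _ ↦ r⁻¹) t := by
  obtain ⟨C, hC, hχ⟩ := exists_cutoffKernel_le_div_sq ℂ
  refine ⟨4 * C, by positivity, fun r hr z t ↦ ?_⟩
  rw [gradient_cutoff, norm_smul, norm_neg, Real.norm_of_nonneg (cutoffKernel_nonneg _ _)]
  by_cases ht : t ∈ closedBall z r \ ball z (r / 2)
  · rw [indicator_of_mem ht]
    calc cutoffKernel (r / 2) (t - z) * ‖t - z‖ ≤ C / (r / 2) ^ 2 * r := by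
          gcongr
          exacts [hχ _ _, mem_closedBall_iff_norm.1 ht.1]
      _ = 4 * C * r⁻¹ := by field_simp; norm_num
  · rw [indicator_of_notMem ht, mul_zero]
    rw [Set.mem_sdiff, mem_closedBall_iff_norm, mem_ball_iff_norm, not_and_or, not_le,
      not_not] at ht
    obtain ht | ht := ht
    · simp [cutoffKernel_eq_zero_of_le_norm (half_pos hr) (x := t - z) (by linarith)]
    · simp [cutoffKernel_eq_zero_of_norm_lt (half_pos hr) ht]

lemma norm_fderiv_one_sub_mul_le (hh : DifferentiableAt ℝ h t) :
    ‖fderiv ℝ (fun y ↦ 1 - (y - z) * h y) t‖ ≤ ‖h t‖ + ‖t - z‖ * ‖fderiv ℝ h t‖ := by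
  have hd := (((hasFDerivAt_id (𝕜 := ℝ) t).sub_const z).mul hh.hasFDerivAt).const_sub 1
  rw [HasFDerivAt.fderiv (f := fun y ↦ 1 - (y - z) * h y) hd, norm_neg]
  refine (norm_add_le _ _).trans ?_
  rw [norm_smul, norm_smul, ContinuousLinearMap.norm_id, mul_one, add_comm]
  rfl

lemma exists_norm_gradient_testWeight_le :
    ∃ D, 0 < D ∧ ∀ r > 0, ∀ (z : ℂ) (h : ℂ → ℂ) (t : ℂ), DifferentiableAt ℝ h t →
      ‖∇ (testWeight z r h) t‖ ≤
        D * ((closedBall z r \ ball z (r / 2)).indicator (fun _ ↦ r⁻¹) t + ‖h t‖ +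
          ‖t - z‖ * ‖fderiv ℝ h t‖) := by
  obtain ⟨C, hC, hκ⟩ := exists_norm_gradient_cutoff_le
  refine ⟨1 + C, by positivity, fun r hr z h t hh ↦ ?_⟩
  set i := (closedBall z r \ ball z (r / 2)).indicator (fun _ ↦ r⁻¹) t with hi
  have hi0 : 0 ≤ i := indicator_nonneg (fun _ _ ↦ by positivity) _
  have hiT : i * ‖t - z‖ ≤ 1 := by
    by_cases ht : t ∈ closedBall z r \ ball z (r / 2)
    · rw [hi, indicator_of_mem ht, inv_mul_le_one₀ hr]
      exact mem_closedBall_iff_norm.1 ht.1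
    · simp [hi, indicator_of_notMem ht]
  have hv : DifferentiableAt ℝ (fun y ↦ 1 - (y - z) * h y) t := by fun_prop
  have hre : HasFDerivAt (fun y ↦ (1 - (y - z) * h y).re) _ t :=
    Complex.reCLM.hasFDerivAt.comp t hv.hasFDerivAt
  have hcut : HasFDerivAt (fun y ↦ cutoff (r / 2) (y - z)) _ t :=
    (hasFDerivAt_comp_sub z).2
      ((contDiff_cutoff (r / 2)).differentiable (by simp) (t - z)).hasFDerivAt
  have hη := (hcut.mul hre).fderiv
  change fderiv ℝ (testWeight z r h) t = _ at hη
  rw [norm_gradient, hη]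
  calc _ ≤ ‖h t‖ + ‖t - z‖ * ‖fderiv ℝ h t‖ + (1 + ‖t - z‖ * ‖h t‖) * (C * i) := by
        refine (norm_add_le _ _).trans (add_le_add ?_ ?_) <;> rw [norm_smul]
        · rw [Real.norm_of_nonneg (cutoff_nonneg _ _)]
          refine (mul_le_of_le_one_left (norm_nonneg _) (cutoff_le_one _ _)).trans ?_
          refine (ContinuousLinearMap.opNorm_comp_le _ _).trans ?_
          rw [Complex.reCLM_norm, one_mul]
          exact norm_fderiv_one_sub_mul_le hh
        · rw [← norm_gradient]
          exact mul_le_mul ((Complex.abs_re_le_norm _).trans norm_one_sub_mul_le) (hκ r hr z t)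
            (norm_nonneg _) (by positivity)
    _ ≤ _ := by
        have hx : C * (i * ‖t - z‖) * ‖h t‖ ≤ C * 1 * ‖h t‖ := by gcongr
        have hy : 0 ≤ C * (‖t - z‖ * ‖fderiv ℝ h t‖) := by positivity
        linarith

end TestWeight

section WeightedIntegrals

section Pointwise

variable {i x y S T W r : ℝ}

lemma add_sq_le_three_mul (a b c : ℝ) : (a + b + c) ^ 2 ≤ 3 * (a ^ 2 + b ^ 2 + c ^ 2) := by
  nlinarith [sq_nonneg (a - b), sq_nonneg (b - c), sq_nonneg (a - c)]

lemma sq_mul_add_sq_le (hS0 : 0 ≤ S) (hS1 : S ≤ 1) (hT0 : 0 ≤ T) (hTr : T ≤ r) (hr1 : r ≤ 1)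
    (hrW : 1 ≤ 2 * r * W) :
    S ^ 2 * (i + x + T * y) ^ 2 ≤ 3 * (i ^ 2 * S) + 6 * r * (x ^ 2 * W + y ^ 2) := by
  have hSS : S ^ 2 ≤ S := by nlinarith
  have hi : S ^ 2 * i ^ 2 ≤ S * i ^ 2 := by gcongr
  have hx : S ^ 2 * x ^ 2 ≤ 1 * (x ^ 2 * (2 * r * W)) :=
    mul_le_mul (by linarith) (le_mul_of_one_le_right (sq_nonneg x) hrW) (sq_nonneg x) zero_le_one
  have hy : S ^ 2 * (T * y) ^ 2 ≤ 1 * (2 * r * y ^ 2) := by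
    rw [mul_pow]
    exact mul_le_mul (by linarith) (mul_le_mul_of_nonneg_right (by nlinarith) (sq_nonneg y))
      (by positivity) zero_le_one
  linarith [mul_le_mul_of_nonneg_left (add_sq_le_three_mul i x (T * y)) (sq_nonneg S)]

lemma log_sq_le_four_mul {u : ℝ} (hu : 1 ≤ u) : Real.log u ^ 2 ≤ 4 * u := by
  have hlog : Real.log u ≤ 2 * √u := by
    have := Real.log_le_sub_one_of_pos (Real.sqrt_pos.2 (zero_lt_one.trans_le hu))
    rw [Real.log_sqrt (by linarith)] at this
    linarith
  calc Real.log u ^ 2 ≤ (2 * √u) ^ 2 := by gcongr; exact Real.log_nonneg hu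
    _ = 4 * u := by rw [mul_pow, Real.sq_sqrt (by linarith)]; norm_num

lemma log_sq_mul_add_sq_le (hi0 : 0 ≤ i) (hT0 : 0 ≤ T) (hTr : T ≤ r) (hr1 : r ≤ 1)
    (hir : i * r ≤ 1) (hiW : i * W ≤ 2 * i ^ 2) (hWT : W * T ≤ 1) (hrW : 1 ≤ 2 * r * W) :
    Real.log (2 * r * W) ^ 2 * (i + x + T * y) ^ 2 ≤
      48 * i ^ 2 + 24 * r * (x ^ 2 * W + y ^ 2) := by
  have hi : r * (i * (i * W)) ≤ 2 * i ^ 2 := by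
    calc r * (i * (i * W)) ≤ r * (i * (2 * i ^ 2)) := by gcongr; linarith
      _ = i * r * (2 * i ^ 2) := by ring
      _ ≤ 2 * i ^ 2 := mul_le_of_le_one_left (by positivity) hir
  have hy : r * (W * T * (T * y ^ 2)) ≤ r * y ^ 2 := by
    refine mul_le_mul_of_nonneg_left ?_ (hT0.trans hTr)
    refine (mul_le_of_le_one_left (by positivity) hWT).trans ?_
    exact mul_le_of_le_one_left (sq_nonneg y) (hTr.trans hr1)
  linarith [mul_le_mul (log_sq_le_four_mul hrW) (add_sq_le_three_mul i x (T * y)) (sq_nonneg _)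
    (by linarith : 0 ≤ 4 * (2 * r * W))]

/-- The linear terms `x * W` and `y` are absorbed by Young's inequality with weight `√r`. -/
lemma mul_add_mul_le (hr : 0 < r) (hi0 : 0 ≤ i) (hx0 : 0 ≤ x) (hy0 : 0 ≤ y) (hS0 : 0 ≤ S)
    (hS1 : S ≤ 1) (hT0 : 0 ≤ T) (hW0 : 0 ≤ W) (hTr : T ≤ r) (hr1 : r ≤ 1) (hir : i * r ≤ 1)
    (hiW : i * W ≤ 2 * i ^ 2) (hWT : W * T ≤ 1) (hrW : 1 ≤ 2 * r * W) :
    (1 + T * x) * S * (i + x + T * y) * W ≤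
      3 * (i ^ 2 * S) + 6 * √r * (x ^ 2 * W + y ^ 2) + (√r)⁻¹ * (W + 1) := by
  have : 0 < √r := Real.sqrt_pos.2 hr
  have hrσ : r ≤ √r := Real.le_sqrt_of_sq_le (by nlinarith)
  have young (a : ℝ) : 2 * a ≤ √r * a ^ 2 + (√r)⁻¹ := by
    have := sq_nonneg (√r * a - 1)
    rw [← sub_nonneg]
    calc (0 : ℝ) ≤ (√r)⁻¹ * (√r * a - 1) ^ 2 := by positivity
      _ = _ := by field_simp; ring
  have hxx : x ^ 2 ≤ 2 * √r * (x ^ 2 * W) := by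
    calc x ^ 2 ≤ x ^ 2 * (2 * r * W) := le_mul_of_one_le_right (sq_nonneg x) hrW
      _ ≤ x ^ 2 * (2 * √r * W) := by gcongr
      _ = _ := by ring
  have hTy : (T * y) ^ 2 ≤ √r * y ^ 2 := by
    rw [mul_pow]
    exact mul_le_mul_of_nonneg_right (by nlinarith) (sq_nonneg y)
  have hannulus : (1 + T * x) * S * i * W ≤ 3 * (i ^ 2 * S) + x ^ 2 := by
    have hTi : T * i ≤ 1 := (mul_le_mul_of_nonneg_right hTr hi0).trans (by linarith)
    calc (1 + T * x) * S * i * W = (1 + T * x) * S * (i * W) := by ring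
      _ ≤ (1 + T * x) * S * (2 * i ^ 2) := by gcongr
      _ = 2 * (i ^ 2 * S) + T * i * (2 * i * x * S) := by ring
      _ ≤ 2 * (i ^ 2 * S) + 1 * (2 * i * x * S) := by gcongr
      _ ≤ 2 * (i ^ 2 * S) + (i ^ 2 + x ^ 2) * S := by
          rw [one_mul]
          gcongr
          exact two_mul_le_add_sq i x
      _ ≤ 3 * (i ^ 2 * S) + x ^ 2 := by nlinarith [mul_le_of_le_one_right (sq_nonneg x) hS1]
  have hh : (1 + T * x) * S * x * W ≤ x * W + x ^ 2 := by
    calc (1 + T * x) * S * x * W = S * (x * W + W * T * x ^ 2) := by ring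
      _ ≤ 1 * (x * W + 1 * x ^ 2) := by gcongr
      _ = _ := by ring
  have hDh : (1 + T * x) * S * (T * y) * W ≤ y + x * (T * y) := by
    calc (1 + T * x) * S * (T * y) * W = S * (W * T) * (y + x * (T * y)) := by ring
      _ ≤ 1 * 1 * (y + x * (T * y)) := by gcongr
      _ = _ := by ring
  nlinarith [mul_le_mul_of_nonneg_right (young x) hW0, young y, two_mul_le_add_sq x (T * y)]

end Pointwise

variable {z : ℂ} {r s N c₁ c₂ c₃ : ℝ} {h : ℂ → ℂ}

lemma setIntegral_closedBall_regInvDist_add_one_le (hs : s ≠ 0) (hr : 0 < r) (hr1 : r ≤ 1)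
    (z : ℂ) : ∫ t in closedBall z r, (regInvDist z s t + 1) ≤ 9 * Real.pi * r := by
  have hK := isCompact_closedBall z r
  rw [integral_add ((regInvDist.continuous hs z).continuousOn.integrableOn_compact hK)
    (integrableOn_const hK.measure_ne_top), setIntegral_const, smul_eq_mul, mul_one,
    Measure.real, Complex.volume_closedBall, ENNReal.toReal_mul, ENNReal.toReal_pow,
    ENNReal.toReal_ofReal hr.le, ENNReal.coe_toReal, NNReal.coe_real_pi]
  have hsq : r ^ 2 * Real.pi ≤ r * Real.pi := by
    gcongr
    nlinarith
  linarith [setIntegral_closedBall_regInvDist_le hs hr z]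

/-- The three error terms of the energy inequality are all dominated in this way. -/
lemma integral_le_of_le_on_closedBall {f g : ℂ → ℝ} (hs : s ≠ 0) (hr : 0 < r) (hr1 : r ≤ 1)
    (hh : ContDiff ℝ 1 h) (hc : HasCompactSupport h)
    (hN : ∫ t, energyDensity z s h t ≤ N) (hg : Continuous g)
    (hc₂ : 0 ≤ c₂) (hc₃ : 0 ≤ c₃) (hf0 : ∀ t, 0 ≤ f t) (hf : ∀ t ∉ closedBall z r, f t = 0)
    (hfle : ∀ t ∈ closedBall z r, f t ≤
      c₁ * ((closedBall z r \ ball z (r / 2)).indicator (fun _ ↦ r⁻¹) t ^ 2 * g t) +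
        c₂ * energyDensity z s h t +
        c₃ * (regInvDist z s t + 1)) :
    ∫ t, f t ≤ c₁ * ((∫ t in closedBall z r \ ball z (r / 2), g t) / r ^ 2) + c₂ * N +
      c₃ * (9 * Real.pi * r) := by
  have hK := isCompact_closedBall z r
  set A := closedBall z r \ ball z (r / 2)
  have hA : MeasurableSet A := measurableSet_closedBall.diff measurableSet_ball
  have hW := regInvDist.continuous hs z
  have hind (t : ℂ) : A.indicator (fun _ ↦ r⁻¹) t ^ 2 * g t =
      A.indicator (fun t ↦ g t / r ^ 2) t := by
    by_cases ht : t ∈ A <;> simp [ht, div_eq_inv_mul]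
  simp only [hind] at hfle
  have hint₁ : IntegrableOn (A.indicator fun t ↦ g t / r ^ 2) (closedBall z r) :=
    ((hg.div_const _).continuousOn.integrableOn_compact hK).indicator hA
  have hint₂ := integrable_energyDensity hs z hh hc
  have hint₃ : IntegrableOn (fun t ↦ regInvDist z s t + 1) (closedBall z r) :=
    (hW.add continuous_const).continuousOn.integrableOn_compact hK
  have hI₁ : ∫ t in closedBall z r, A.indicator (fun t ↦ g t / r ^ 2) t =
      (∫ t in A, g t) / r ^ 2 := by
    rw [setIntegral_indicator hA, inter_eq_right.2 sdiff_subset, integral_div]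
  have hI₂ : ∫ t in closedBall z r, energyDensity z s h t ≤ N :=
    (setIntegral_energyDensity_le hs z hh hc _).trans hN
  have hI₃ := setIntegral_closedBall_regInvDist_add_one_le hs hr hr1 z
  have hint := ((hint₁.const_mul c₁).add (hint₂.integrableOn.const_mul c₂)).add
    (hint₃.const_mul c₃)
  rw [← setIntegral_eq_integral_of_forall_compl_eq_zero hf]
  calc ∫ t in closedBall z r, f t
      ≤ ∫ t in closedBall z r, (c₁ * A.indicator (fun t ↦ g t / r ^ 2) t +
          c₂ * energyDensity z s h t +
          c₃ * (regInvDist z s t + 1)) :=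
        integral_mono_of_nonneg (.of_forall hf0) hint
          (ae_restrict_of_forall_mem measurableSet_closedBall hfle)
    _ = c₁ * ((∫ t in A, g t) / r ^ 2) +
          c₂ * (∫ t in closedBall z r, energyDensity z s h t) +
          c₃ * (∫ t in closedBall z r, (regInvDist z s t + 1)) := by
        rw [integral_add, integral_add (hint₁.const_mul c₁) (hint₂.integrableOn.const_mul c₂),
          integral_const_mul, integral_const_mul, integral_const_mul, hI₁]
        exacts [(hint₁.const_mul c₁).add (hint₂.integrableOn.const_mul c₂), hint₃.const_mul c₃]
    _ ≤ _ := by gcongr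

section Weight

variable {η S : ℂ → ℝ} {D : ℝ}

lemma indicator_annulus_inv_nonneg (hr : 0 < r) (z t : ℂ) :
    0 ≤ (closedBall z r \ ball z (r / 2)).indicator (fun _ ↦ r⁻¹) t :=
  indicator_nonneg (fun _ _ ↦ (inv_pos.2 hr).le) t

lemma indicator_annulus_inv_mul_le_one (hr : 0 < r) (z t : ℂ) :
    (closedBall z r \ ball z (r / 2)).indicator (fun _ ↦ r⁻¹) t * r ≤ 1 := by
  by_cases ht : t ∈ closedBall z r \ ball z (r / 2)
  · rw [indicator_of_mem ht, inv_mul_cancel₀ hr.ne']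
  · simp [indicator_of_notMem ht]

lemma indicator_annulus_inv_mul_regInvDist_le (hs : s ≠ 0) (hr : 0 < r) (z t : ℂ) :
    (closedBall z r \ ball z (r / 2)).indicator (fun _ ↦ r⁻¹) t * regInvDist z s t ≤
      2 * (closedBall z r \ ball z (r / 2)).indicator (fun _ ↦ r⁻¹) t ^ 2 := by
  by_cases ht : t ∈ closedBall z r \ ball z (r / 2)
  · have hT : r / 2 ≤ ‖t - z‖ := not_lt.1 fun hlt ↦ ht.2 (mem_ball_iff_norm.2 hlt)
    have hW : regInvDist z s t * r ≤ 2 := by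
      linarith [mul_le_mul_of_nonneg_left hT (regInvDist.nonneg z s t),
        regInvDist.mul_norm_sub_le_one hs z t]
    rw [indicator_of_mem ht, sq, ← mul_assoc, mul_comm 2, mul_assoc]
    gcongr
    rwa [← div_eq_mul_inv, le_div_iff₀ hr]
  · simp [indicator_of_notMem ht]

lemma integral_sq_mul_norm_gradient_sq_le_of_weight (hs : 0 < s) (hsr : s ≤ r) (hr1 : r ≤ 1)
    (hh : ContDiff ℝ 1 h) (hc : HasCompactSupport h)
    (hN : ∫ t, energyDensity z s h t ≤ N)
    (hη : tsupport η ⊆ closedBall z r)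
    (hgrad : ∀ t, ‖∇ η t‖ ≤ D * ((closedBall z r \ ball z (r / 2)).indicator (fun _ ↦ r⁻¹) t +
      ‖h t‖ + ‖t - z‖ * ‖fderiv ℝ h t‖))
    (hS : Continuous S) (hS0 : ∀ t, 0 ≤ S t) (hS1 : ∀ t, S t ≤ 1) :
    ∫ t, S t ^ 2 * ‖∇ η t‖ ^ 2 ≤
      D ^ 2 * (3 * ((∫ t in closedBall z r \ ball z (r / 2), S t) / r ^ 2) + 6 * r * N) := by
  have hr := hs.trans_le hsr
  refine (integral_le_of_le_on_closedBall (c₁ := 3 * D ^ 2) (c₂ := 6 * r * D ^ 2) (c₃ := 0) hs.ne'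
    hr hr1 hh hc hN hS (by positivity) le_rfl (fun t ↦ by positivity) (fun t ht ↦ ?_)
    fun t ht ↦ ?_).trans_eq (by ring)
  · simp [gradient_eq_zero_of_notMem_tsupport fun hmem ↦ ht (hη hmem)]
  · rw [mem_closedBall_iff_norm] at ht
    have hpt := mul_le_mul_of_nonneg_left (sq_mul_add_sq_le
      (i := (closedBall z r \ ball z (r / 2)).indicator (fun _ ↦ r⁻¹) t) (x := ‖h t‖)
      (y := ‖fderiv ℝ h t‖) (hS0 t) (hS1 t) (norm_nonneg _) ht hr1
      (regInvDist.one_le_two_mul_mul hs hsr ht)) (sq_nonneg D)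
    have hsq := mul_le_mul_of_nonneg_left (pow_le_pow_left₀ (norm_nonneg _) (hgrad t) 2)
      (sq_nonneg (S t))
    rw [energyDensity]
    linarith

lemma integral_log_sq_mul_norm_gradient_sq_le_of_weight (hs : 0 < s) (hsr : s ≤ r) (hr1 : r ≤ 1)
    (hh : ContDiff ℝ 1 h) (hc : HasCompactSupport h)
    (hN : ∫ t, energyDensity z s h t ≤ N)
    (hη : tsupport η ⊆ closedBall z r)
    (hgrad : ∀ t, ‖∇ η t‖ ≤ D * ((closedBall z r \ ball z (r / 2)).indicator (fun _ ↦ r⁻¹) t +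
      ‖h t‖ + ‖t - z‖ * ‖fderiv ℝ h t‖)) :
    ∫ t, Real.log (2 * r * regInvDist z s t) ^ 2 * ‖∇ η t‖ ^ 2 ≤
      D ^ 2 * (48 * Real.pi + 24 * r * N) := by
  have hr := hs.trans_le hsr
  have harea : (∫ _t in closedBall z r \ ball z (r / 2), (1 : ℝ)) / r ^ 2 ≤ Real.pi := by
    rw [setIntegral_const, smul_eq_mul, mul_one, div_le_iff₀ (by positivity)]
    refine (measureReal_mono sdiff_subset (isCompact_closedBall z r).measure_ne_top).trans_eq ?_
    rw [Measure.real, Complex.volume_closedBall, ENNReal.toReal_mul, ENNReal.toReal_pow,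
      ENNReal.toReal_ofReal hr.le, ENNReal.coe_toReal, NNReal.coe_real_pi, mul_comm]
  refine (integral_le_of_le_on_closedBall (c₁ := 48 * D ^ 2) (c₂ := 24 * r * D ^ 2) (c₃ := 0) hs.ne'
    hr hr1 hh hc hN (continuous_const (y := 1)) (by positivity) le_rfl (fun t ↦ by positivity)
    (fun t ht ↦ ?_) fun t ht ↦ ?_).trans ?_
  · simp [gradient_eq_zero_of_notMem_tsupport fun hmem ↦ ht (hη hmem)]
  · rw [mem_closedBall_iff_norm] at ht
    have hpt := mul_le_mul_of_nonneg_left (log_sq_mul_add_sq_le (x := ‖h t‖)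
      (y := ‖fderiv ℝ h t‖) (indicator_annulus_inv_nonneg hr z t) (norm_nonneg _) ht hr1
      (indicator_annulus_inv_mul_le_one hr z t)
      (indicator_annulus_inv_mul_regInvDist_le hs.ne' hr z t)
      (regInvDist.mul_norm_sub_le_one hs.ne' z t)
      (regInvDist.one_le_two_mul_mul hs hsr ht)) (sq_nonneg D)
    have hsq := mul_le_mul_of_nonneg_left (pow_le_pow_left₀ (norm_nonneg _) (hgrad t) 2)
      (sq_nonneg (Real.log (2 * r * regInvDist z s t)))
    rw [energyDensity]
    linarith
  · linarith [mul_le_mul_of_nonneg_left harea (sq_nonneg D)]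

lemma integral_mul_inner_gradient_log_le_of_weight (hs : 0 < s) (hsr : s ≤ r) (hr1 : r ≤ 1)
    (hh : ContDiff ℝ 1 h) (hc : HasCompactSupport h)
    (hN : ∫ t, energyDensity z s h t ≤ N)
    (hη : tsupport η ⊆ closedBall z r) (hηle : ∀ t, |η t| ≤ 1 + ‖t - z‖ * ‖h t‖) (hD : 0 ≤ D)
    (hgrad : ∀ t, ‖∇ η t‖ ≤ D * ((closedBall z r \ ball z (r / 2)).indicator (fun _ ↦ r⁻¹) t +
      ‖h t‖ + ‖t - z‖ * ‖fderiv ℝ h t‖))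
    (hS : Continuous S) (hS0 : ∀ t, 0 ≤ S t) (hS1 : ∀ t, S t ≤ 1) :
    ∫ t, η t * S t * ⟪∇ η t, ∇ (fun y ↦ Real.log (2 * r * regInvDist z s y)) t⟫_ℝ ≤
      D * (3 * ((∫ t in closedBall z r \ ball z (r / 2), S t) / r ^ 2) + 6 * √r * N +
        9 * Real.pi * √r) := by
  have hr := hs.trans_le hsr
  refine (Real.le_norm_self _).trans ((norm_integral_le_integral_norm _).trans ?_)
  refine (integral_le_of_le_on_closedBall (c₁ := 3 * D) (c₂ := 6 * √r * D) (c₃ := D * (√r)⁻¹) hs.ne'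
    hr hr1 hh hc hN hS (by positivity) (by positivity) (fun t ↦ norm_nonneg _)
    (fun t ht ↦ ?_) fun t ht ↦ ?_).trans_eq ?_
  · simp [gradient_eq_zero_of_notMem_tsupport fun hmem ↦ ht (hη hmem)]
  · rw [mem_closedBall_iff_norm] at ht
    have hpt := mul_le_mul_of_nonneg_left (mul_add_mul_le hr (indicator_annulus_inv_nonneg hr z t)
      (norm_nonneg (h t)) (norm_nonneg (fderiv ℝ h t)) (hS0 t) (hS1 t) (norm_nonneg (t - z))
      (regInvDist.nonneg z s t) ht hr1 (indicator_annulus_inv_mul_le_one hr z t)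
      (indicator_annulus_inv_mul_regInvDist_le hs.ne' hr z t)
      (regInvDist.mul_norm_sub_le_one hs.ne' z t) (regInvDist.one_le_two_mul_mul hs hsr ht)) hD
    refine le_trans ?_ (hpt.trans_eq (by rw [energyDensity]; ring))
    rw [norm_mul, norm_mul, Real.norm_eq_abs, Real.norm_of_nonneg (hS0 t)]
    calc |η t| * S t * ‖⟪∇ η t, ∇ (fun y ↦ Real.log (2 * r * regInvDist z s y)) t⟫_ℝ‖
        ≤ (1 + ‖t - z‖ * ‖h t‖) * S t * (‖∇ η t‖ * regInvDist z s t) := by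
          have hηt := hηle t
          have hSt := hS0 t
          gcongr
          refine (norm_inner_le_norm _ _).trans ?_
          gcongr
          exact regInvDist.norm_gradient_log_le (by positivity) hs.ne' z t
      _ ≤ (1 + ‖t - z‖ * ‖h t‖) * S t * (D * _ * regInvDist z s t) :=
          mul_le_mul_of_nonneg_left (mul_le_mul_of_nonneg_right (hgrad t)
            (regInvDist.nonneg z s t)) (mul_nonneg (by positivity) (hS0 t))
      _ = _ := by ring
  · have hσ : (√r)⁻¹ * r = √r := by rw [inv_mul_eq_div, Real.div_sqrt]
    linear_combination (9 * Real.pi * D) * hσ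

end Weight

end WeightedIntegrals

section CoreEstimate

variable {z : ℂ} {r s N : ℝ} {h : ℂ → ℂ} {S : ℂ → ℝ}

lemma neg_laplacian_log_regInvDist (hr : r ≠ 0) (hs : s ≠ 0) (z t : ℂ) :
    -Δ (fun y ↦ Real.log (2 * r * regInvDist z s y)) t = 2 * s ^ 2 * regInvDist z s t ^ 4 := by
  rw [regInvDist.laplacian_log (by positivity) hs, Complex.finrank_real_complex]
  push_cast
  linear_combination (-2 * regInvDist z s t ^ 2) * regInvDist.sq_mul_add_eq_one hs z t

lemma sub_le_mul_testWeight_sq_mul (hs : 0 < s) (hsr : 2 * s ≤ r) {t : ℂ} (ht : ‖t - z‖ ≤ s)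
    (hS : 1 / 2 ≤ S t) :
    1 / (8 * s ^ 2) - r * (‖h t‖ ^ 2 * regInvDist z s t) ≤
      S t * testWeight z r h t ^ 2 * (2 * s ^ 2 * regInvDist z s t ^ 4) := by
  have hr : 0 < r := by linarith
  have hW0 := regInvDist.nonneg z s t
  have hsW : 1 ≤ 2 * s * regInvDist z s t := regInvDist.one_le_two_mul_mul hs le_rfl ht
  have hW : 1 / (2 * s ^ 2) ≤ regInvDist z s t ^ 2 := by
    rw [div_le_iff₀ (by positivity)]
    have := regInvDist.sq_mul_add_eq_one hs.ne' z t
    have hsq : ‖t - z‖ ^ 2 ≤ s ^ 2 := by gcongr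
    nlinarith [mul_le_mul_of_nonneg_left hsq (sq_nonneg (regInvDist z s t))]
  have hW4 : 1 / (2 * s ^ 2) ≤ 2 * s ^ 2 * regInvDist z s t ^ 4 := by
    calc 1 / (2 * s ^ 2) = 2 * s ^ 2 * (1 / (2 * s ^ 2)) ^ 2 := by field_simp
      _ ≤ 2 * s ^ 2 * (regInvDist z s t ^ 2) ^ 2 := by gcongr
      _ = _ := by ring
  have hh : ‖h t‖ ^ 2 ≤ r * (‖h t‖ ^ 2 * regInvDist z s t) := by
    calc ‖h t‖ ^ 2 ≤ ‖h t‖ ^ 2 * (2 * s * regInvDist z s t) :=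
          le_mul_of_one_le_right (sq_nonneg _) hsW
      _ ≤ ‖h t‖ ^ 2 * (r * regInvDist z s t) := by gcongr
      _ = _ := by ring
  calc 1 / (8 * s ^ 2) - r * (‖h t‖ ^ 2 * regInvDist z s t)
      ≤ 1 / (8 * s ^ 2) - ‖h t‖ ^ 2 / 4 := by linarith [sq_nonneg ‖h t‖]
    _ = 1 / 2 * (1 / 2 - s ^ 2 * ‖h t‖ ^ 2) * (1 / (2 * s ^ 2)) := by field_simp; ring
    _ ≤ 1 / 2 * testWeight z r h t ^ 2 * (1 / (2 * s ^ 2)) := by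
        gcongr
        exact half_sub_le_testWeight_sq hr hsr ht
    _ ≤ S t * testWeight z r h t ^ 2 * (2 * s ^ 2 * regInvDist z s t ^ 4) := by gcongr

lemma sub_le_integral_mul_testWeight_sq_mul (hs : 0 < s) (hsr : 2 * s ≤ r) (hh : ContDiff ℝ 1 h)
    (hc : HasCompactSupport h)
    (hN : ∫ t, energyDensity z s h t ≤ N) (hS : Continuous S)
    (hS0 : ∀ t, 0 ≤ S t) (hSs : ∀ t ∈ closedBall z s, 1 / 2 ≤ S t) :
    Real.pi / 8 - r * N ≤
      ∫ t, S t * testWeight z r h t ^ 2 * (2 * s ^ 2 * regInvDist z s t ^ 4) := by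
  have hr : 0 < r := by linarith
  have hη := (contDiff_testWeight (z := z) (r := r) hh).continuous
  have hW := regInvDist.continuous hs.ne' z
  have hint : Integrable fun t ↦
      S t * testWeight z r h t ^ 2 * (2 * s ^ 2 * regInvDist z s t ^ 4) := by
    refine Continuous.integrable_of_hasCompactSupport (by fun_prop) ?_
    refine .intro (isCompact_closedBall z r) fun t ht ↦ ?_
    simp [testWeight_eq_zero hr ht]
  have hnn (t : ℂ) : 0 ≤ S t * testWeight z r h t ^ 2 * (2 * s ^ 2 * regInvDist z s t ^ 4) := by
    have := hS0 t
    positivity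
  have hint₁ : IntegrableOn (fun _ ↦ 1 / (8 * s ^ 2)) (closedBall z s) :=
    integrableOn_const (isCompact_closedBall z s).measure_ne_top
  have hint₂ : Integrable (energyDensity z s h) :=
    integrable_energyDensity hs.ne' z hh hc
  calc Real.pi / 8 - r * N
      ≤ (∫ _t in closedBall z s, 1 / (8 * s ^ 2)) -
          r * ∫ t in closedBall z s, energyDensity z s h t := by
        rw [setIntegral_const, smul_eq_mul, Measure.real, Complex.volume_closedBall,
          ENNReal.toReal_mul, ENNReal.toReal_pow, ENNReal.toReal_ofReal hs.le,
          ENNReal.coe_toReal, NNReal.coe_real_pi]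
        gcongr
        · exact le_of_eq (by field_simp)
        · exact (setIntegral_energyDensity_le hs.ne' z hh hc _).trans hN
    _ = ∫ t in closedBall z s, (1 / (8 * s ^ 2) -
          r * energyDensity z s h t) := by
        rw [integral_sub hint₁ (hint₂.integrableOn.const_mul r), integral_const_mul]
    _ ≤ ∫ t in closedBall z s,
          S t * testWeight z r h t ^ 2 * (2 * s ^ 2 * regInvDist z s t ^ 4) := by
        refine setIntegral_mono_on (hint₁.sub (hint₂.integrableOn.const_mul r)) hint.integrableOn
          measurableSet_closedBall fun t ht ↦ ?_
        have hpt := sub_le_mul_testWeight_sq_mul (h := h) hs hsr (mem_closedBall_iff_norm.1 ht)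
          (hSs t ht)
        rw [energyDensity]
        linarith [mul_nonneg hr.le (sq_nonneg ‖fderiv ℝ h t‖)]
    _ ≤ _ := setIntegral_le_integral hint (.of_forall hnn)

lemma energy_error_le_of_weight {η : ℂ → ℝ} {D : ℝ} (hs : 0 < s) (hsr : s ≤ r) (hr1 : r ≤ 1)
    (hh : ContDiff ℝ 1 h) (hc : HasCompactSupport h)
    (hN : ∫ t, energyDensity z s h t ≤ N)
    (hη : tsupport η ⊆ closedBall z r) (hηle : ∀ t, |η t| ≤ 1 + ‖t - z‖ * ‖h t‖) (hD : 0 < D)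
    (hgrad : ∀ t, ‖∇ η t‖ ≤ D * ((closedBall z r \ ball z (r / 2)).indicator (fun _ ↦ r⁻¹) t +
      ‖h t‖ + ‖t - z‖ * ‖fderiv ℝ h t‖))
    (hS : Continuous S) (hS0 : ∀ t, 0 ≤ S t) (hS1 : ∀ t, S t ≤ 1) :
    4 / (1 / (768 * D ^ 2)) * (∫ t, S t ^ 2 * ‖∇ η t‖ ^ 2) +
        1 / (768 * D ^ 2) * (∫ t, Real.log (2 * r * regInvDist z s t) ^ 2 * ‖∇ η t‖ ^ 2) +
        2 * (∫ t, η t * S t * ⟪∇ η t, ∇ (fun y ↦ Real.log (2 * r * regInvDist z s y)) t⟫_ℝ) ≤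
      Real.pi / 16 + √r * N + (18432 * D ^ 4 + 60 * D) *
        ((∫ t in closedBall z r \ ball z (r / 2), S t) / r ^ 2 + √r * (1 + N)) := by
  have hSη := integral_sq_mul_norm_gradient_sq_le_of_weight hs hsr hr1 hh hc hN hη hgrad hS hS0 hS1
  have hLη := integral_log_sq_mul_norm_gradient_sq_le_of_weight hs hsr hr1 hh hc hN hη hgrad
  have hηS := integral_mul_inner_gradient_log_le_of_weight hs hsr hr1 hh hc hN hη hηle hD.le hgrad
    hS hS0 hS1
  set e := (∫ t in closedBall z r \ ball z (r / 2), S t) / r ^ 2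
  have hr := hs.trans_le hsr
  have he : 0 ≤ e := div_nonneg (integral_nonneg hS0) (sq_nonneg r)
  have hN0 := (integral_nonneg (energyDensity_nonneg z s h)).trans hN
  have hσ : r * N ≤ √r * N := by
    gcongr
    exact Real.le_sqrt_of_sq_le (by nlinarith)
  have hLη' : 1 / (768 * D ^ 2) * (∫ t, Real.log (2 * r * regInvDist z s t) ^ 2 * ‖∇ η t‖ ^ 2) ≤
      Real.pi / 16 + r * N / 32 := by
    calc _ ≤ 1 / (768 * D ^ 2) * (D ^ 2 * (48 * Real.pi + 24 * r * N)) := by gcongr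
      _ = _ := by field_simp; ring
  have hSη' : 4 / (1 / (768 * D ^ 2)) * (∫ t, S t ^ 2 * ‖∇ η t‖ ^ 2) ≤
      9216 * (D ^ 4 * e) + 18432 * (D ^ 4 * (√r * N)) := by
    calc _ ≤ 4 / (1 / (768 * D ^ 2)) * (D ^ 2 * (3 * e + 6 * r * N)) := by gcongr
      _ = 9216 * (D ^ 4 * e) + 18432 * (D ^ 4 * (r * N)) := by field_simp; ring
      _ ≤ _ := by gcongr
  have hπ : Real.pi * (D * √r) ≤ 3.15 * (D * √r) := by
    gcongr
    exact Real.pi_lt_d2.le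
  have hDe : 0 ≤ D * e := by positivity
  have hDσ : 0 ≤ D * √r := by positivity
  have hDN : 0 ≤ D * (√r * N) := by positivity
  have hDe4 : 0 ≤ D ^ 4 * e := by positivity
  have hDσ4 : 0 ≤ D ^ 4 * √r := by positivity
  linarith [mul_nonneg (Real.sqrt_nonneg r) hN0]

/-- The logarithm `log (2 * r / |t - z|)`, regularized at scale `s`, has Laplacian of total mass
about `-2π` near `z` but gradient of small energy when averaged against `testWeight z r h`; the
two facts are incompatible unless `S` has large mean at scale `r`. -/
theorem exists_one_le_mul_setIntegral_add :
    ∃ K : ℝ, 0 < K ∧ ∀ (z : ℂ) (r s N : ℝ) (h : ℂ → ℂ) (S : ℂ → ℝ), 0 < s → 2 * s ≤ r → r ≤ 1 →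
      ContDiff ℝ 1 h → HasCompactSupport h →
      ∫ t, energyDensity z s h t ≤ N →
      ContDiff ℝ 2 S → (∀ t, 0 ≤ S t) → (∀ t, S t ≤ 1) →
      (∀ t ∈ closedBall z s, 1 / 2 ≤ S t) → (∀ t ∈ tsupport (testWeight z r h), 0 ≤ Δ S t) →
      1 ≤ K * ((∫ t in closedBall z r \ ball z (r / 2), S t) / r ^ 2 + √r * (1 + N)) := by
  obtain ⟨D, hD, hgrad⟩ := exists_norm_gradient_testWeight_le
  refine ⟨6 * (2 + 18432 * D ^ 4 + 60 * D), by positivity,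
    fun z r s N h S hs hsr hr1 hh hc hN hS hS0 hS1 hSs hΔ ↦ ?_⟩
  have hr : 0 < r := by linarith
  have hsr' : s ≤ r := by linarith
  have hgrad' (t : ℂ) := hgrad r hr z h t (hh.differentiable one_ne_zero t)
  have hη := tsupport_testWeight_subset (z := z) (h := h) hr
  have hL0 : ∀ t ∈ tsupport (testWeight z r h), 0 ≤ Real.log (2 * r * regInvDist z s t) :=
    fun t ht ↦ Real.log_nonneg (regInvDist.one_le_two_mul_mul hs hsr'
      (mem_closedBall_iff_norm.1 (hη ht)))
  have henergy := integral_mul_sq_mul_neg_laplacian_le (μ := volume) (α := 1 / (768 * D ^ 2))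
    (by positivity) (contDiff_testWeight hh) ((isCompact_closedBall z r).of_isClosed_subset
      (isClosed_tsupport _) hη) hS (regInvDist.contDiff_log (by positivity : 2 * r ≠ 0) hs.ne' z)
    (fun t _ ↦ hS0 t) hL0 hΔ
  simp_rw [neg_laplacian_log_regInvDist hr.ne' hs.ne'] at henergy
  have hlower := sub_le_integral_mul_testWeight_sq_mul hs hsr hh hc hN hS.continuous hS0 hSs
  have herror := energy_error_le_of_weight hs hsr' hr1 hh hc hN hη (fun t ↦ abs_testWeight_le) hD
    hgrad' hS.continuous hS0 hS1
  set e := (∫ t in closedBall z r \ ball z (r / 2), S t) / r ^ 2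
  have he : 0 ≤ e := div_nonneg (integral_nonneg hS0) (sq_nonneg r)
  have hσ : r * N ≤ √r * N := by
    gcongr
    exacts [(integral_nonneg (energyDensity_nonneg z s h)).trans hN,
      Real.le_sqrt_of_sq_le (by nlinarith)]
  linarith [Real.pi_gt_three, Real.sqrt_nonneg r]

end CoreEstimate

section Laplacian

lemma isLittleO_sub_taylor_two {E : Type*} [NormedAddCommGroup E] [NormedSpace ℝ E] {f : E → ℝ}
    (hf : ContDiff ℝ 2 f) (x : E) :
    (fun v ↦ f (x + v) - f x - fderiv ℝ f x v - fderiv ℝ (fderiv ℝ f) x v v / 2) =o[𝓝 0]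
      fun v ↦ ‖v‖ ^ 2 := by
  have hdf : Differentiable ℝ (fderiv ℝ f) :=
    (hf.fderiv_right (m := 1) (by norm_num)).differentiable one_ne_zero
  have hsymm : IsSymmSndFDerivAt ℝ f x := hf.contDiffAt.isSymmSndFDerivAt (by simp)
  set B := fderiv ℝ (fderiv ℝ f) x
  have hderiv (v : E) : HasFDerivAt
      (fun v ↦ f (x + v) - f x - fderiv ℝ f x v - B v v / 2)
      (fderiv ℝ f (x + v) - fderiv ℝ f x - B v) v := by
    have hfv : HasFDerivAt (fun v ↦ f (x + v)) (fderiv ℝ f (x + v)) v :=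
      (hf.differentiable two_ne_zero _).hasFDerivAt.comp v ((hasFDerivAt_id v).const_add x)
    have hB := (B.hasFDerivAt (x := v)).clm_apply (hasFDerivAt_id v)
    refine (((hfv.sub_const (f x)).sub (fderiv ℝ f x).hasFDerivAt).sub
      (hB.mul_const (2⁻¹ : ℝ))).congr_fderiv ?_
    ext w
    have hvw : B v w = B w v := hsymm.eq v w
    simp [← hvw]
    ring
  have hlittle : (fun v ↦ fderiv ℝ f (x + v) - fderiv ℝ f x - B v) =o[𝓝 0] fun v ↦ v :=
    hasFDerivAt_iff_isLittleO_nhds_zero.1 (hdf x).hasFDerivAt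
  simpa using convex_univ.isLittleO_pow_succ (x₀ := (0 : E)) (n := 1) (mem_univ _)
    (fun v _ ↦ (hderiv v).hasFDerivWithinAt) (by simpa using hlittle.norm_right)

lemma fderiv_fderiv_add_fderiv_fderiv_I_mul {f : ℂ → ℝ} (hf : ContDiff ℝ 2 f) (c v : ℂ) :
    fderiv ℝ (fderiv ℝ f) c v v + fderiv ℝ (fderiv ℝ f) c (Complex.I * v) (Complex.I * v) =
      ‖v‖ ^ 2 * Δ f c := by
  have hsymm : fderiv ℝ (fderiv ℝ f) c 1 Complex.I = fderiv ℝ (fderiv ℝ f) c Complex.I 1 :=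
    (hf.contDiffAt.isSymmSndFDerivAt (by simp)).eq 1 Complex.I
  obtain ⟨a, b, rfl⟩ : ∃ a b : ℝ, v = a • (1 : ℂ) + b • Complex.I := ⟨v.re, v.im, by simp⟩
  have hI : Complex.I * (a • (1 : ℂ) + b • Complex.I) = a • Complex.I + (-b) • (1 : ℂ) := by
    apply Complex.ext <;> simp
  have hnorm : ‖a • (1 : ℂ) + b • Complex.I‖ ^ 2 = a * a + b * b := by
    rw [← Complex.normSq_eq_norm_sq, Complex.normSq_apply]; simp
  rw [hI, hnorm, InnerProductSpace.laplacian_eq_iteratedFDeriv_complexPlane]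
  simp only [iteratedFDeriv_two_apply, map_add, map_smul, add_apply, smul_apply, smul_eq_mul,
    hsymm, Matrix.cons_val_zero, Matrix.cons_val_one]
  ring

lemma circleAverage_comp_I_mul_sub {E : Type*} [NormedAddCommGroup E] [NormedSpace ℝ E] (f : ℂ → E)
    (c : ℂ) (R : ℝ) :
    Real.circleAverage (fun z ↦ f (c + Complex.I * (z - c))) c R = Real.circleAverage f c R := by
  rw [Real.circleAverage_eq_integral_add (f := f) (Real.pi / 2), Real.circleAverage_def]
  congr! 4 with θ
  simp [circleMap, add_mul, Complex.exp_add, Complex.exp_pi_div_two_mul_I]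
  ring

/-- Summing over the orbit of the rotation by `π/2` kills the first-order term of `f` and turns
its Hessian into the Laplacian. -/
lemma isLittleO_sum_rotations_sub_laplacian {f : ℂ → ℝ} (hf : ContDiff ℝ 2 f) (c : ℂ) :
    (fun v ↦ ∑ n ∈ Finset.range 4, f (c + Complex.I ^ n * v) - 4 * f c - ‖v‖ ^ 2 * Δ f c) =o[𝓝 0]
      fun v ↦ ‖v‖ ^ 2 := by
  have hrot (n : ℕ) : (fun v ↦ f (c + Complex.I ^ n * v) - f c - fderiv ℝ f c (Complex.I ^ n * v) -
      fderiv ℝ (fderiv ℝ f) c (Complex.I ^ n * v) (Complex.I ^ n * v) / 2) =o[𝓝 0]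
      fun v ↦ ‖v‖ ^ 2 := by
    simpa [Function.comp_def] using (isLittleO_sub_taylor_two hf c).comp_tendsto
      ((continuous_const_mul (Complex.I ^ n)).tendsto' 0 0 (mul_zero _))
  refine (Asymptotics.IsLittleO.sum fun n (_ : n ∈ Finset.range 4) ↦ hrot n).congr_left fun v ↦ ?_
  rw [← fderiv_fderiv_add_fderiv_fderiv_I_mul hf]
  simp [Finset.sum_range_succ, Complex.I_pow_three]
  ring

lemma laplacian_nonneg_of_le_circleAverage {f : ℂ → ℝ} (hf : ContDiff ℝ 2 f) {c : ℂ}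
    (h : ∀ᶠ R in 𝓝[>] 0, f c ≤ Real.circleAverage f c R) : 0 ≤ Δ f c := by
  by_contra! hneg
  obtain ⟨ε, hε, hball⟩ := Metric.eventually_nhds_iff.1
    ((isLittleO_sum_rotations_sub_laplacian hf c).def (c := -Δ f c / 2) (by linarith))
  obtain ⟨R, hR, hR0, hRε⟩ := (h.and (Ioo_mem_nhdsGT hε)).exists
  let g (n : ℕ) (z : ℂ) : ℝ := f (c + Complex.I ^ n * (z - c))
  have hgint (n : ℕ) : CircleIntegrable (g n) c R :=
    have := hf.continuous
    Continuous.continuousOn (by fun_prop) |>.circleIntegrable hR0.le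
  have hgavg (n : ℕ) : Real.circleAverage (g n) c R = Real.circleAverage f c R := by
    induction n with
    | zero => simp [g]
    | succ n ih =>
      rw [← ih, ← circleAverage_comp_I_mul_sub (g n)]
      simp [g, pow_succ, mul_assoc]
  have hsum : Real.circleAverage (∑ n ∈ Finset.range 4, g n) c R =
      4 * Real.circleAverage f c R := by
    simp [Real.circleAverage_sum fun n _ ↦ hgint n, hgavg]
  have hle : Real.circleAverage (∑ n ∈ Finset.range 4, g n) c R ≤
      4 * f c + R ^ 2 * Δ f c / 2 := by
    refine Real.circleAverage_mono_on_of_le_circle (CircleIntegrable.sum _ fun n _ ↦ hgint n)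
      fun z hz ↦ ?_
    have hzR : ‖z - c‖ = R := by simpa [dist_eq_norm, abs_of_pos hR0] using hz
    have := (abs_le.1 (hball (y := z - c) (by simpa [hzR] using hRε))).2
    simp only [hzR, Real.norm_eq_abs, abs_pow, sq_abs] at this
    simp only [Finset.sum_apply, g]
    linarith
  nlinarith [mul_neg_of_pos_of_neg (pow_pos hR0 2) hneg]

end Laplacian

section Submean

lemma circleIntegrable_of_norm_le {E : Type*} [NormedAddCommGroup E] {f : ℂ → E}
    (hf : StronglyMeasurable f) {C : ℝ} (hC : ∀ x, ‖f x‖ ≤ C) (c : ℂ) (R : ℝ) :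
    CircleIntegrable f c R :=
  intervalIntegrable_const.mono_fun (f := fun _ ↦ C)
    (hf.comp_measurable (continuous_circleMap c R).measurable).aestronglyMeasurable
    (.of_forall fun _ ↦ (hC _).trans (le_abs_self C))

/-- The sub-mean value inequality for a real function on all circles bounding a disc in `Ω`;
unlike subharmonicity semicontinuity is not required. -/
def IsSubmeanOn (s : ℂ → ℝ) (Ω : Set ℂ) : Prop :=
  ∀ ⦃c : ℂ⦄ ⦃R : ℝ⦄, 0 < R → closedBall c R ⊆ Ω → s c ≤ Real.circleAverage s c R

namespace IsSubmeanOn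

variable {s t : ℂ → ℝ} {Ω : Set ℂ} {x : ℂ}

lemma max (hs : IsSubmeanOn s Ω) (ht : IsSubmeanOn t Ω) (his : ∀ c R, CircleIntegrable s c R)
    (hit : ∀ c R, CircleIntegrable t c R) : IsSubmeanOn (s ⊔ t) Ω := by
  intro c R hR hcR
  have hi : CircleIntegrable (s ⊔ t) c R :=
    ⟨(his c R).1.sup (hit c R).1, (his c R).2.sup (hit c R).2⟩
  exact max_le
    ((hs hR hcR).trans (Real.circleAverage_mono (his c R) hi fun _ _ ↦ le_max_left _ _))
    ((ht hR hcR).trans (Real.circleAverage_mono (hit c R) hi fun _ _ ↦ le_max_right _ _))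

lemma const_add_const_mul (hs : IsSubmeanOn s Ω) (his : ∀ c R, CircleIntegrable s c R) {a : ℝ}
    (ha : 0 ≤ a) (b : ℝ) : IsSubmeanOn (fun z ↦ b + a * s z) Ω := by
  intro c R hR hcR
  have havg : Real.circleAverage (fun z ↦ b + a * s z) c R = b + a * Real.circleAverage s c R := by
    simp only [← smul_eq_mul (a := a)]
    rw [Real.circleAverage_fun_add (circleIntegrable_const b c R) (his c R).const_fun_smul,
      Real.circleAverage_const, Real.circleAverage_fun_smul]
  simpa only [havg] using add_le_add_right (mul_le_mul_of_nonneg_left (hs hR hcR) ha) b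

lemma laplacian_nonneg (hs : IsSubmeanOn s Ω) (hsmooth : ContDiff ℝ 2 s) (hx : Ω ∈ 𝓝 x) :
    0 ≤ Δ s x := by
  obtain ⟨ε, hε, hball⟩ := Metric.nhds_basis_closedBall.mem_iff.1 hx
  refine laplacian_nonneg_of_le_circleAverage hsmooth ?_
  filter_upwards [Ioc_mem_nhdsGT hε] with R hR
  exact hs hR.1 ((closedBall_subset_closedBall hR.2).trans hball)

end IsSubmeanOn

end Submean

section Convolution

variable {φ s : ℂ → ℝ} {x : ℂ} {C : ℝ}

open scoped Convolution
open ContinuousLinearMap (lsmul)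

lemma convolutionExistsAt_of_norm_le (hφ : Integrable φ) (hs : Measurable s)
    (hC : ∀ x, ‖s x‖ ≤ C) : ConvolutionExistsAt φ s x (lsmul ℝ ℝ) volume :=
  hφ.mul_bdd (hs.comp (measurable_const.sub measurable_id)).aestronglyMeasurable
    (.of_forall fun _ ↦ hC _)

lemma integrable_mul_comp_circleMap_sub (hφ : Integrable φ) (hs : Measurable s)
    (hC : ∀ x, ‖s x‖ ≤ C) (c : ℂ) (R : ℝ) :
    Integrable (Function.uncurry fun (θ : ℝ) (y : ℂ) ↦ φ y * s (circleMap c R θ - y))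
      ((volume.restrict (uIoc 0 (2 * Real.pi))).prod volume) :=
  have : IsFiniteMeasure (volume.restrict (uIoc 0 (2 * Real.pi))) :=
    inferInstanceAs (IsFiniteMeasure (volume.restrict (Ioc _ _)))
  (hφ.comp_snd _).mul_bdd (hs.comp (((continuous_circleMap c R).comp continuous_fst).sub
    continuous_snd).measurable).aestronglyMeasurable (.of_forall fun _ ↦ hC _)

lemma mul_circleAverage_sub (c y : ℂ) (R : ℝ) :
    φ y * Real.circleAverage s (c - y) R = (2 * Real.pi)⁻¹ *
      ∫ θ in (0 : ℝ)..(2 * Real.pi), φ y * s (circleMap c R θ - y) := by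
  rw [intervalIntegral.integral_const_mul, mul_left_comm]
  simp [Real.circleAverage_def, circleMap, sub_add_eq_add_sub]

lemma circleAverage_convolution (hφ : Integrable φ) (hs : Measurable s) (hC : ∀ x, ‖s x‖ ≤ C)
    (c : ℂ) (R : ℝ) :
    Real.circleAverage (φ ⋆[lsmul ℝ ℝ, volume] s) c R =
      (φ ⋆[lsmul ℝ ℝ, volume] fun z ↦ Real.circleAverage s z R) c := by
  simp only [Real.circleAverage_def (f := φ ⋆[lsmul ℝ ℝ, volume] s), convolution_def,
    ContinuousLinearMap.lsmul_apply, smul_eq_mul, mul_circleAverage_sub, integral_const_mul,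
    intervalIntegral_integral_swap (integrable_mul_comp_circleMap_sub hφ hs hC c R)]

lemma convolutionExistsAt_circleAverage (hφ : Integrable φ) (hs : Measurable s)
    (hC : ∀ x, ‖s x‖ ≤ C) (c : ℂ) (R : ℝ) :
    ConvolutionExistsAt φ (fun z ↦ Real.circleAverage s z R) c (lsmul ℝ ℝ) volume := by
  refine ((integrable_mul_comp_circleMap_sub hφ hs hC c R).integral_prod_right.const_mul
    (2 * Real.pi)⁻¹).congr (.of_forall fun y ↦ ?_)
  simp [mul_circleAverage_sub, intervalIntegral.integral_of_le Real.two_pi_pos.le,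
    uIoc_of_le Real.two_pi_pos.le]

lemma IsSubmeanOn.convolution {Ω : Set ℂ} (h : IsSubmeanOn s Ω) (hφ : Integrable φ)
    (hφ0 : ∀ y, 0 ≤ φ y) (hs : Measurable s) (hC : ∀ x, ‖s x‖ ≤ C) :
    IsSubmeanOn (φ ⋆[lsmul ℝ ℝ, volume] s) {x | ∀ y ∈ Function.support φ, x - y ∈ Ω} := by
  intro c R hR hcR
  rw [circleAverage_convolution hφ hs hC]
  refine integral_mono (convolutionExistsAt_of_norm_le hφ hs hC)
    (convolutionExistsAt_circleAverage hφ hs hC c R) fun y ↦ ?_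
  by_cases hy : φ y = 0
  · simp [hy]
  · refine mul_le_mul_of_nonneg_left (h hR fun t ht ↦ ?_) (hφ0 y)
    simpa using hcR (a := t + y) (by simpa [dist_eq_norm, sub_sub_eq_add_sub] using ht) y hy

lemma convolution_mem_Icc (hφ0 : ∀ y, 0 ≤ φ y) (hφ1 : ∫ y, φ y = 1) (hs : Measurable s)
    (hC : ∀ x, ‖s x‖ ≤ C) {a b : ℝ} (h : ∀ y ∈ Function.support φ, s (x - y) ∈ Icc a b) :
    (φ ⋆[lsmul ℝ ℝ, volume] s) x ∈ Icc a b := by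
  have hφ : Integrable φ := integrable_of_integral_eq_one hφ1
  have hconst (c : ℝ) : ∫ y, φ y * c = c := by rw [integral_mul_const, hφ1, one_mul]
  have hex := convolutionExistsAt_of_norm_le (x := x) hφ hs hC
  constructor
  · refine (hconst a).ge.trans (integral_mono (hφ.mul_const a) hex fun y ↦ ?_)
    by_cases hy : φ y = 0
    · simp [hy]
    · exact mul_le_mul_of_nonneg_left (h y hy).1 (hφ0 y)
  · refine (integral_mono hex (hφ.mul_const b) fun y ↦ ?_).trans (hconst b).le
    by_cases hy : φ y = 0
    · simp [hy]
    · exact mul_le_mul_of_nonneg_left (h y hy).2 (hφ0 y)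

lemma setIntegral_convolution_le (hφ0 : ∀ y, 0 ≤ φ y) (hφ1 : ∫ y, φ y = 1)
    (hs0 : ∀ x, 0 ≤ s x) {A A' : Set ℂ} (hA : MeasurableSet A)
    (hA' : MeasurableSet A') (hsA' : IntegrableOn s A')
    (h : ∀ x ∈ A, ∀ y ∈ Function.support φ, x - y ∈ A') :
    ∫ x in A, (φ ⋆[lsmul ℝ ℝ, volume] s) x ≤ ∫ x in A', s x := by
  have hφ : Integrable φ := integrable_of_integral_eq_one hφ1
  have hs' : Integrable (A'.indicator s) := (integrable_indicator_iff hA').2 hsA'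
  calc ∫ x in A, (φ ⋆[lsmul ℝ ℝ, volume] s) x
      = ∫ x in A, (φ ⋆[lsmul ℝ ℝ, volume] A'.indicator s) x := by
        refine setIntegral_congr_fun hA fun x hx ↦ integral_congr_ae (.of_forall fun y ↦ ?_)
        by_cases hy : φ y = 0
        · simp [hy]
        · simp [h x hx y hy]
    _ ≤ ∫ x, (φ ⋆[lsmul ℝ ℝ, volume] A'.indicator s) x :=
        setIntegral_le_integral (hφ.integrable_convolution _ hs') (.of_forall fun x ↦
          integral_nonneg fun y ↦ mul_nonneg (hφ0 y) (indicator_nonneg (fun z _ ↦ hs0 z) _))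
    _ = ∫ x in A', s x := by
        rw [integral_convolution _ hφ hs', hφ1, integral_indicator hA']; simp

/-- The approximating functions are the mollifications of `s` by a smooth bump function. -/
lemma IsSubmeanOn.exists_contDiff_laplacian_nonneg {Ω K : Set ℂ} (h : IsSubmeanOn s Ω)
    (hs : Measurable s) (hs01 : ∀ x, s x ∈ Icc 0 1) (hΩ : IsOpen Ω) (hK : IsCompact K)
    (hKΩ : K ⊆ Ω) {δ : ℝ} (hδ : 0 < δ) :
    ∃ S : ℂ → ℝ, ContDiff ℝ 2 S ∧ (∀ x, S x ∈ Icc 0 1) ∧ (∀ x ∈ K, 0 ≤ Δ S x) ∧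
      (∀ x b, (∀ y ∈ ball x δ, b ≤ s y) → b ≤ S x) ∧
      ∀ A A', MeasurableSet A → MeasurableSet A' → volume A' ≠ ⊤ → thickening δ A ⊆ A' →
        ∫ x in A, S x ≤ ∫ x in A', s x := by
  obtain ⟨η, hη, hthick⟩ := hK.exists_thickening_subset_open hΩ hKΩ
  have hbound (x : ℂ) : ‖s x‖ ≤ 1 := by
    rw [Real.norm_of_nonneg (hs01 x).1]; exact (hs01 x).2
  obtain ⟨ρ, hρ, hρδη⟩ := exists_between (lt_min hδ (half_pos hη))
  let φ : ContDiffBump (0 : ℂ) := ⟨ρ / 2, ρ, half_pos hρ, half_lt_self hρ⟩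
  have hsupp {y : ℂ} (hy : y ∈ Function.support (φ.normed volume)) : ‖y‖ < ρ := by
    simpa [φ.support_normed_eq] using hy
  have hloc : LocallyIntegrable s := (locallyIntegrable_const (1 : ℝ)).mono
    hs.aestronglyMeasurable (.of_forall fun x ↦ by simpa using hbound x)
  have hsmooth : ContDiff ℝ 2 (φ.normed volume ⋆[lsmul ℝ ℝ, volume] s) :=
    φ.hasCompactSupport_normed.contDiff_convolution_left _ φ.contDiff_normed hloc
  refine ⟨φ.normed volume ⋆[lsmul ℝ ℝ, volume] s, hsmooth, fun x ↦
    convolution_mem_Icc φ.nonneg_normed φ.integral_normed hs hbound fun _ _ ↦ hs01 _, fun x hx ↦ ?_,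
    fun x b hb ↦ ?_, fun A A' hA hA' hfin hAA' ↦ ?_⟩
  · refine (h.convolution φ.integrable_normed φ.nonneg_normed hs hbound).laplacian_nonneg hsmooth ?_
    filter_upwards [ball_mem_nhds x (half_pos hη)] with x' hx' y hy
    refine hthick (mem_thickening_iff.2 ⟨x, hx, ?_⟩)
    calc dist (x' - y) x ≤ dist x' x + ‖y‖ := by
          simpa [dist_eq_norm, sub_right_comm] using norm_sub_le (x' - x) y
      _ < η / 2 + η / 2 :=
          add_lt_add hx' ((hsupp hy).trans (hρδη.trans_le (min_le_right _ _)))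
      _ = η := add_halves η
  · refine (convolution_mem_Icc (b := 1) φ.nonneg_normed φ.integral_normed hs hbound
      fun y hy ↦ ⟨hb _ ?_, (hs01 _).2⟩).1
    simpa using (hsupp hy).trans (hρδη.trans_le (min_le_left _ _))
  · refine setIntegral_convolution_le φ.nonneg_normed φ.integral_normed (fun x ↦ (hs01 x).1) hA hA'
      (Measure.integrableOn_of_bounded hfin hs.aestronglyMeasurable (.of_forall hbound))
      fun x hx y hy ↦ hAA' (mem_thickening_iff.2 ⟨x, hx, ?_⟩)
    simpa using (hsupp hy).trans (hρδη.trans_le (min_le_left _ _))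

end Convolution

section Barrier

lemma exists_integral_max_lt {X : Type*} [MeasurableSpace X] {μ : Measure X} [IsFiniteMeasure μ]
    {q : X → ℝ} (hq : AEStronglyMeasurable q μ) (hneg : ∀ᵐ x ∂μ, q x < 0) {ε : ℝ} (hε : 0 < ε) :
    ∃ a > 0, ∫ x, max 0 (1 + a * q x) ∂μ < ε := by
  have hlim : Tendsto (fun a : ℝ ↦ ∫ x, max 0 (1 + a * q x) ∂μ) atTop (𝓝 (∫ _, (0 : ℝ) ∂μ)) := by
    refine tendsto_integral_filter_of_dominated_convergence (fun _ ↦ (1 : ℝ))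
      (.of_forall fun a ↦ aestronglyMeasurable_const.sup
        (aestronglyMeasurable_const.add (hq.const_mul a))) ?_ (integrable_const _) ?_
    · filter_upwards [eventually_ge_atTop 0] with a ha
      filter_upwards [hneg] with x hx
      rw [Real.norm_of_nonneg (le_max_left _ _)]
      exact max_le zero_le_one (by nlinarith)
    · filter_upwards [hneg] with x hx
      refine tendsto_const_nhds.congr' ?_
      filter_upwards [eventually_ge_atTop (-(q x)⁻¹)] with a ha
      refine (max_eq_left ?_).symm
      have := mul_le_mul_of_nonpos_right ha hx.le
      rw [neg_mul, inv_mul_cancel₀ hx.ne] at this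
      linarith
  rw [integral_zero] at hlim
  exact ((eventually_gt_atTop 0).and (hlim.eventually (gt_mem_nhds hε))).exists

/-- The truncation `max u (-1)` on `Ω`, extended by `-1`. -/
noncomputable def truncatedBarrier (u : ℂ → EReal) (Ω : Set ℂ) : ℂ → ℝ :=
  Ω.indicator (fun z ↦ (max (u z) (-1 : ℝ)).toReal + 1) - 1

variable {u : ℂ → EReal} {Ω : Set ℂ} {z : ℂ}

lemma coe_truncatedBarrier (hneg : u z < 0) (hz : z ∈ Ω) :
    (truncatedBarrier u Ω z : EReal) = max (u z) (-1 : ℝ) := by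
  simp only [truncatedBarrier, Pi.sub_apply, indicator_of_mem hz, Pi.one_apply,
    add_sub_cancel_right]
  refine EReal.coe_toReal (max_lt (hneg.trans EReal.zero_lt_top) ?_).ne (lt_max_of_lt_right ?_).ne'
  · exact EReal.coe_lt_top (-1)
  · exact EReal.bot_lt_coe (-1)

lemma truncatedBarrier_mem_Ico (hneg : ∀ z ∈ Ω, u z < 0) (z : ℂ) :
    truncatedBarrier u Ω z ∈ Ico (-1) 0 := by
  by_cases hz : z ∈ Ω
  · have h := coe_truncatedBarrier (hneg z hz) hz
    constructor
    · exact EReal.coe_le_coe_iff.1 (h ▸ le_max_right _ _)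
    · exact EReal.coe_lt_coe_iff.1
        (h ▸ max_lt (hneg z hz) (EReal.coe_lt_coe_iff.2 neg_one_lt_zero))
  · simp [truncatedBarrier, hz]

lemma measurable_truncatedBarrier (hΩ : IsOpen Ω) (hu : UpperSemicontinuousOn u Ω) :
    Measurable (truncatedBarrier u Ω) := by
  have hdomRestrict : Measurable (Ω.domRestrict u) :=
    (upperSemicontinuousOn_iff_restrict.2 hu).measurable
  have hin : Ω.domRestrict (Ω.indicator fun z ↦ (max (u z) (-1 : ℝ)).toReal + 1) =
      fun z ↦ (max (Ω.domRestrict u z) (-1 : ℝ)).toReal + 1 := by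
    ext z; simp
  have hout : Ωᶜ.domRestrict (Ω.indicator fun z ↦ (max (u z) (-1 : ℝ)).toReal + 1) =
      fun _ ↦ 0 := by
    ext z; exact indicator_of_notMem z.2 _
  refine (measurable_of_restrict_of_restrict_compl hΩ.measurableSet ?_ ?_).sub measurable_const
  · rw [hin]; exact (hdomRestrict.max measurable_const).ereal_toReal.add_const 1
  · rw [hout]; exact measurable_const

lemma circleIntegrable_truncatedBarrier (hΩ : IsOpen Ω) (hu : UpperSemicontinuousOn u Ω)
    (hneg : ∀ z ∈ Ω, u z < 0) (c : ℂ) (R : ℝ) : CircleIntegrable (truncatedBarrier u Ω) c R :=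
  circleIntegrable_of_norm_le (measurable_truncatedBarrier hΩ hu).stronglyMeasurable (C := 1)
    (fun x ↦ abs_le.2 ((truncatedBarrier_mem_Ico hneg x).imp_right fun h ↦ h.le.trans one_pos.le))
    c R

lemma SubharmonicOn.isSubmeanOn_truncatedBarrier (hu : SubharmonicOn u Ω) (hΩ : IsOpen Ω)
    (hneg : ∀ z ∈ Ω, u z < 0) : IsSubmeanOn (truncatedBarrier u Ω) Ω := by
  intro c R hR hcR
  have hc : c ∈ Ω := hcR (mem_closedBall_self hR.le)
  have havg : circleAvgTrunc u c R 1 = Real.circleAverage (truncatedBarrier u Ω) c R := by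
    have hmem (θ : ℝ) : c + R * Complex.exp (θ * Complex.I) ∈ Ω :=
      hcR (circleMap_mem_closedBall c hR.le θ)
    simp [circleAvgTrunc, Real.circleAverage_def, truncatedBarrier, circleMap, hmem]
  have hge : -1 ≤ Real.circleAverage (truncatedBarrier u Ω) c R := by
    rw [← Real.circleAverage_const (-1 : ℝ) c R]
    exact Real.circleAverage_mono (circleIntegrable_const _ c R)
      (circleIntegrable_truncatedBarrier hΩ hu.1 hneg c R)
      fun x _ ↦ (truncatedBarrier_mem_Ico hneg x).1
  rw [← EReal.coe_le_coe_iff, coe_truncatedBarrier (hneg c hc) hc, ← havg]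
  exact max_le ((hu.2.2 c hc R hR hcR).trans (iInf_le _ 1)) (EReal.coe_le_coe_iff.2 (havg ▸ hge))

lemma SubharmonicOn.exists_isSubmeanOn_setIntegral_lt {w : ℂ} (hu : SubharmonicOn u Ω)
    (hΩ : IsOpen Ω) (hneg : ∀ z ∈ Ω, u z < 0) (hlim : Tendsto u (𝓝[Ω] w) (𝓝 0)) {A : Set ℂ}
    (hA : volume A ≠ ⊤) {ε : ℝ} (hε : 0 < ε) :
    ∃ s : ℂ → ℝ, IsSubmeanOn s Ω ∧ Measurable s ∧ (∀ x, s x ∈ Icc 0 1) ∧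
      (∀ᶠ x in 𝓝[Ω] w, 1 / 2 ≤ s x) ∧ ∫ x in A, s x < ε := by
  have hq := measurable_truncatedBarrier hΩ hu.1
  have hqmem := truncatedBarrier_mem_Ico hneg
  have hqint := circleIntegrable_truncatedBarrier hΩ hu.1 hneg
  set q := truncatedBarrier u Ω with hqdef
  have : IsFiniteMeasure (volume.restrict A) := ⟨by simpa using hA.lt_top⟩
  obtain ⟨a, ha, hint⟩ := exists_integral_max_lt (μ := volume.restrict A)
    hq.aestronglyMeasurable (.of_forall fun x ↦ (hqmem x).2) hε
  refine ⟨fun x ↦ max 0 (1 + a * q x), ?_, by fun_prop, fun x ↦ ⟨le_max_left _ _, ?_⟩, ?_, hint⟩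
  · have hzero : IsSubmeanOn (fun _ ↦ 0) Ω := fun c R _ _ ↦ (Real.circleAverage_const 0 c R).ge
    exact hzero.max ((hu.isSubmeanOn_truncatedBarrier hΩ hneg).const_add_const_mul hqint ha.le 1)
      (circleIntegrable_const 0)
      fun c R ↦ (circleIntegrable_const 1 c R).add (hqint c R).const_fun_smul
  · exact max_le zero_le_one (by nlinarith [(hqmem x).2])
  · have hlt : ((-(2 * a)⁻¹ : ℝ) : EReal) < 0 := EReal.coe_lt_coe_iff.2 (by simpa using ha)
    filter_upwards [hlim.eventually (lt_mem_nhds hlt), self_mem_nhdsWithin] with x hx hxΩ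
    have hqx : -(2 * a)⁻¹ ≤ q x := by
      rw [← EReal.coe_le_coe_iff, hqdef, coe_truncatedBarrier (hneg x hxΩ) hxΩ]
      exact hx.le.trans (le_max_left _ _)
    have hmul : a * -(2 * a)⁻¹ = -(1 / 2) := by field_simp
    exact le_max_of_le_right (by nlinarith)

end Barrier

section Regular

open TopologicalSpace (Opens)
open scoped Distributions

lemma tsupport_testWeight_subset_of_testFunction {Ω : Opens ℂ} (ψ : 𝓓(Ω, ℂ)) {z : ℂ} {r R : ℝ}
    {h : ℂ → ℂ} (hr : 0 < r) (hrR : r ≤ R) (hψ : ∀ t ∈ ball z R, ψ t = 1 - (t - z) * h t) :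
    tsupport (testWeight z r h) ⊆ Ω := by
  refine (closure_mono fun t ht ↦ ?_).trans ψ.tsupport_subset
  have hball : t ∈ ball z R := by
    by_contra hnot
    have hrt : r ≤ ‖t - z‖ := by rw [← dist_eq_norm]; exact hrR.trans (not_lt.1 hnot)
    exact ht (by simp [testWeight, cutoff_eq_zero (half_pos hr) (x := t - z) (by linarith)])
  exact fun h0 ↦ ht (by simp [testWeight, ← hψ t hball, h0])

lemma exists_one_le_mul_setIntegral_isSubmeanOn_add :
    ∃ K : ℝ, 0 < K ∧ ∀ (Ω : Set ℂ) (z w : ℂ) (r N : ℝ) (h : ℂ → ℂ) (s : ℂ → ℝ), IsOpen Ω →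
      0 < r → r ≤ 1 → dist z w ≤ r → ContDiff ℝ 1 h → HasCompactSupport h →
      (∀ σ ≠ 0, ∫ t, energyDensity z σ h t ≤ N) →
      tsupport (testWeight z r h) ⊆ Ω → IsSubmeanOn s Ω → Measurable s → (∀ x, s x ∈ Icc 0 1) →
      (∀ᶠ x in 𝓝 z, 1 / 2 ≤ s x) →
      1 ≤ K * ((∫ t in closedBall w (3 * r), s t) / r ^ 2 + √r * (1 + N)) := by
  obtain ⟨K, hK, hcore⟩ := exists_one_le_mul_setIntegral_add
  refine ⟨K, hK, fun Ω z w r N h s hΩ hr hr1 hzw hh hhc henergy hsupp hs hsm hs01 hhalf ↦ ?_⟩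
  obtain ⟨δ, hδ, hball⟩ := Metric.eventually_nhds_iff_ball.1 hhalf
  obtain ⟨η, hη, hηδ⟩ := exists_between (lt_min hδ hr)
  rw [lt_min_iff] at hηδ
  obtain ⟨S, hS, hS01, hSlap, hSlow, hSint⟩ := hs.exists_contDiff_laplacian_nonneg hsm hs01 hΩ
    ((isCompact_closedBall z r).of_isClosed_subset (isClosed_tsupport _)
      (tsupport_testWeight_subset hr)) hsupp (half_pos hη)
  have hannulus : ∫ t in closedBall z r \ ball z (r / 2), S t ≤
      ∫ t in closedBall w (3 * r), s t := by
    refine hSint _ _ (measurableSet_closedBall.diff measurableSet_ball)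
      measurableSet_closedBall (isCompact_closedBall _ _).measure_ne_top ?_
    refine (thickening_subset_of_subset _ Set.sdiff_subset).trans ?_
    rw [thickening_closedBall (half_pos hη) hr.le]
    exact ball_subset_closedBall.trans (closedBall_subset_closedBall' (by linarith))
  have hhalfS (t : ℂ) (ht : t ∈ closedBall z (η / 2)) : 1 / 2 ≤ S t := by
    refine hSlow t _ fun y hy ↦ hball y ?_
    rw [mem_ball] at hy ⊢
    rw [mem_closedBall] at ht
    linarith [dist_triangle y t z]
  have hone := hcore z r (η / 2) N h S (half_pos hη) (by linarith) hr1 hh hhc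
    (henergy _ (half_pos hη).ne') hS (fun t ↦ (hS01 t).1) (fun t ↦ (hS01 t).2) hhalfS hSlap
  refine hone.trans ?_
  gcongr

lemma exists_lt_bergmanKernel_of_setIntegral_le (M : ℝ≥0) {R ρ : ℝ} (hR : 0 < R) (hρ : 0 < ρ) :
    ∃ r ∈ Ioc 0 ρ, ∃ ε > 0, ∀ (Ω : Opens ℂ) (V : Set ℂ) (z w : ℂ) (s : ℂ → ℝ), z ∈ Ω →
      (Ω : Set ℂ) ⊆ ball z R → dist z w ≤ r → IsOpen V → closedBall z r ⊆ V →
      IsSubmeanOn s (V ∩ Ω) → Measurable s → (∀ x, s x ∈ Icc 0 1) → (∀ᶠ x in 𝓝 z, 1 / 2 ≤ s x) →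
      ∫ x in closedBall w (3 * r), s x ≤ ε → M < bergmanKernel (Ω : Set ℂ) z := by
  obtain ⟨K, hK, hcore⟩ := exists_one_le_mul_setIntegral_isSubmeanOn_add
  obtain ⟨N, hN⟩ := exists_sobolev_bound_of_bergmanKernel_le hR M
  have hlim : Tendsto (fun r : ℝ ↦ √r * (1 + N)) (𝓝[>] 0) (𝓝 0) :=
    (Continuous.tendsto' (by fun_prop) 0 0 (by simp)).mono_left nhdsWithin_le_nhds
  obtain ⟨r, hrN, hr, hrmin⟩ :=
    ((hlim.eventually (gt_mem_nhds (show 0 < (2 * K)⁻¹ by positivity))).and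
      (Ioc_mem_nhdsGT (lt_min hρ (lt_min one_pos hR)))).exists
  rw [le_min_iff, le_min_iff] at hrmin
  refine ⟨r, ⟨hr, hrmin.1⟩, r ^ 2 * (2 * K)⁻¹, by positivity,
    fun Ω V z w s hz hΩR hzw hV hrV hs hsm hs01 hhalf hint ↦ ?_⟩
  by_contra! hle
  obtain ⟨h, hh, hhc, ⟨ψ, hψ⟩, henergy⟩ := hN Ω z hz hΩR hle
  have hsupp : tsupport (testWeight z r h) ⊆ V ∩ Ω :=
    subset_inter ((tsupport_testWeight_subset hr).trans hrV)
      (tsupport_testWeight_subset_of_testFunction ψ hr hrmin.2.2 hψ)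
  have hone := hcore _ z w r N h s (hV.inter Ω.isOpen) hr hrmin.2.1 hzw (contDiff_infty.1 hh 1) hhc
    henergy hsupp hs hsm hs01 hhalf
  have hmean : (∫ t in closedBall w (3 * r), s t) / r ^ 2 ≤ (2 * K)⁻¹ :=
    (div_le_iff₀' (by positivity)).2 hint
  have hKinv : K * (2 * K)⁻¹ = 1 / 2 := by field_simp
  nlinarith

theorem bergman_tendsto_top_of_regular_general {D : Set ℂ} (hopen : IsOpen D)
    (hbd : Bornology.IsBounded D) {w : ℂ} (hreg : RegularBoundaryPt D w) :
    Tendsto (bergmanKernel D) (𝓝[D] w) (𝓝 ⊤) := by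
  rw [ENNReal.tendsto_nhds_top_iff_nnreal]
  intro M
  obtain ⟨U, hU, hwU, u, hu, hneg, hlim⟩ := hreg
  obtain ⟨ρ, hρ, hρU⟩ := Metric.nhds_basis_closedBall.mem_iff.1 (hU.mem_nhds hwU)
  obtain ⟨r, ⟨hr, hrρ⟩, ε, hε, hlarge⟩ := exists_lt_bergmanKernel_of_setIntegral_le M
    (R := diam D + 1) (by positivity) (half_pos hρ)
  obtain ⟨s, hs, hsm, hs01, hhalf, hint⟩ := hu.exists_isSubmeanOn_setIntegral_lt (hU.inter hopen)
    hneg hlim (A := closedBall w (3 * r)) (isCompact_closedBall _ _).measure_ne_top hε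
  rw [← nhdsWithin_inter_of_mem (mem_nhdsWithin_of_mem_nhds (hU.mem_nhds hwU))]
  filter_upwards [eventually_eventually_nhdsWithin.2 hhalf, self_mem_nhdsWithin,
    mem_nhdsWithin_of_mem_nhds (ball_mem_nhds w hr)] with z hz hzUD hzw
  rw [mem_ball] at hzw
  refine hlarge ⟨D, hopen⟩ U z w s hzUD.2 (fun t ht ↦ ?_) hzw.le hU
    ((closedBall_subset_closedBall' (by linarith)).trans hρU) hs hsm hs01
    ((hU.inter hopen).nhdsWithin_eq hzUD ▸ hz) hint.le
  exact mem_ball.2 ((dist_le_diam_of_mem hbd ht hzUD.2).trans_lt (lt_add_one _))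

end Regular

/-- **Proposition 6.** If `D ⊆ ℂ` is a bounded domain and `w ∈ ∂D` is a regular boundary
point, then `K_D(z) → ∞` as `D ∋ z → w`. -/
theorem bergman_tendsto_top_of_regular (D : Set ℂ)
    (hopen : IsOpen D) (hconn : IsConnected D) (hbd : Bornology.IsBounded D)
    (w : ℂ) (hw : w ∈ frontier D) (hreg : RegularBoundaryPt D w) :
    Tendsto (fun z => bergmanKernel D z) (𝓝[D] w) (𝓝 (⊤ : ℝ≥0∞)) :=
  bergman_tendsto_top_of_regular_general hopen hbd hreg
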